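/- arXiv:1701.01849 — 4 statements merged into one kernel-verified Lean document; each statement's English description precedes it below -/
import Mathlib

section
/- Geometric characterization of q-rank: for a cubic form f on V and a natural number r, qrank(f) ≤ r if and only if there exists a linear subspace W ⊆ V of codimension at most r (i.e. the quotient V/W has dimension at most r) such that f(w) = 0 for all w ∈ W. -/
open scoped BigOperators

/-- The q-rank of a function `f : V → k`: the least `r` such that
`f = ∑ i in Fin r, ℓᵢ · qᵢ` with `ℓᵢ` linear functionals and `qᵢ` quadratic forms,
as an element of `ℕ∞` (`⊤` if no such expression exists). -/
noncomputable def qrank (k : Type*) [Field k] {V : Type*} [AddCommGroup V] [Module k V]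
    (f : V → k) : ℕ∞ :=
  sInf {r : ℕ∞ | ∃ m : ℕ, r = m ∧
    ∃ (ℓ : Fin m → (V →ₗ[k] k)) (q : Fin m → QuadraticForm k V),
      ∀ v, f v = ∑ i, ℓ i v * q i v}

/-- `f : V → k` is a cubic form: `f v = T (v,v,v)` for a symmetric trilinear map `T`. -/
def IsCubicForm (k : Type*) [Field k] {V : Type*} [AddCommGroup V] [Module k V]
    (f : V → k) : Prop :=
  ∃ T : V →ₗ[k] V →ₗ[k] V →ₗ[k] k,
    (∀ x y z, T x y z = T y x z) ∧ (∀ x y z, T x y z = T x z y) ∧ ∀ v, f v = T v v v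

/-!
If `f = ∑ ℓᵢ qᵢ` has `r` terms, it vanishes on the common kernel of the `ℓᵢ`, which has codimension
at most `r`. Conversely, let `p` be a linear projection of `V` to `W` and put `u = v - p v`.
Replacing the arguments of `T v v v` by `p v` one at a time gives
`T v v v = T u v v + T (p v) u v + T (p v) (p v) u + T (p v) (p v) (p v)`, whose last term is zero
when the form vanishes on `W`. The other three are linear in `u`, which has `dim (V ⧸ W)`
coordinates, and their coefficients are quadratic in `v`.
-/

section Quotient

variable {R V ι : Type*} [Ring R] [AddCommGroup V] [Module R V] [Fintype ι]

theorem rank_quotient_ker_pi_le_card [StrongRankCondition R] (ℓ : ι → V →ₗ[R] R) :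
    Module.rank R (V ⧸ LinearMap.ker (LinearMap.pi ℓ)) ≤ Fintype.card ι := by
  have rank_le := LinearMap.lift_rank_le_of_injective _
    (LinearMap.ker_eq_bot.mp (Submodule.ker_liftQ_eq_bot' _ (LinearMap.pi ℓ) rfl))
  simpa using rank_le

theorem exists_eq_sum_repr_smul_add_mem (W : Submodule R V) (b : Module.Basis ι R (V ⧸ W)) :
    ∃ (e : ι → V) (p : V →ₗ[R] V),
      (∀ v, p v ∈ W) ∧ ∀ v, v = ∑ i, b.repr (W.mkQ v) i • e i + p v := by
  choose e mkQ_e using fun i => W.mkQ_surjective (b i)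
  let lift : (V ⧸ W) →ₗ[R] V := b.constr ℕ e
  have lift_apply (x : V ⧸ W) : lift x = ∑ i, b.repr x i • e i := b.constr_apply_fintype ℕ e x
  refine ⟨e, LinearMap.id - lift ∘ₗ W.mkQ, fun v => ?_, fun v => by simp [lift_apply]⟩
  have mkQ_lift : W.mkQ (lift (W.mkQ v)) = W.mkQ v := by
    simp only [lift_apply, map_sum, map_smul, mkQ_e, b.sum_repr]
  exact (Submodule.Quotient.eq W).mp mkQ_lift.symm

end Quotient

section Trilinear

variable {R V N : Type*} [CommRing R] [AddCommGroup V] [Module R V] [AddCommGroup N] [Module R N]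
  (T : V →ₗ[R] V →ₗ[R] V →ₗ[R] N) (p : V →ₗ[R] V)

/-- The quadratic map `v ↦ T e v v + T (p v) e v + T (p v) (p v) e`: the coefficient of the
direction `e` when `v` is replaced by `p v` in `T v v v` one argument at a time, left to right. -/
def cubicCofactor (e : V) : QuadraticMap R V N :=
  LinearMap.BilinMap.toQuadraticMap
    (T e + T.flip e ∘ₗ p + (T.compr₂ (LinearMap.applyₗ e)).compl₁₂ p p)

theorem cubicCofactor_apply (e v : V) :
    cubicCofactor T p e v = T e v v + T (p v) e v + T (p v) (p v) e :=
  rfl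

theorem cubicCofactor_sum_smul {ι : Type*} [Fintype ι] (c : ι → R) (e : ι → V) (v : V) :
    cubicCofactor T p (∑ i, c i • e i) v = ∑ i, c i • cubicCofactor T p (e i) v := by
  simp only [cubicCofactor_apply, map_sum, map_smul, LinearMap.sum_apply, LinearMap.smul_apply,
    smul_add, Finset.sum_add_distrib]

theorem trilinear_apply_self_eq_cubicCofactor_add {u v : V} (hv : v = u + p v) :
    T v v v = cubicCofactor T p u v + T (p v) (p v) (p v) := by
  obtain rfl : u = v - p v := eq_sub_of_add_eq hv.symm
  simp only [cubicCofactor_apply, map_sub, LinearMap.sub_apply]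
  abel

end Trilinear

section QRank

variable {k V : Type*} [Field k] [AddCommGroup V] [Module k V]

theorem qrank_le_iff_exists_eq_sum {f : V → k} {r : ℕ} :
    qrank k f ≤ r ↔ ∃ m ≤ r, ∃ (ℓ : Fin m → V →ₗ[k] k) (q : Fin m → QuadraticForm k V),
      ∀ v, f v = ∑ i, ℓ i v * q i v := by
  constructor
  · intro h
    have lt_succ : qrank k f < (r + 1 : ℕ) := h.trans_lt (by exact_mod_cast r.lt_succ_self)
    obtain ⟨_, ⟨m, rfl, hm⟩, m_lt⟩ := sInf_lt_iff.mp lt_succ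
    exact ⟨m, Nat.lt_succ_iff.mp (by exact_mod_cast m_lt), hm⟩
  · rintro ⟨m, m_le, hm⟩
    exact sInf_le_of_le ⟨m, rfl, hm⟩ (by exact_mod_cast m_le)

theorem exists_rank_quotient_le_of_qrank_le {f : V → k} {r : ℕ} (h : qrank k f ≤ r) :
    ∃ W : Submodule k V, Module.rank k (V ⧸ W) ≤ r ∧ ∀ w ∈ W, f w = 0 := by
  obtain ⟨m, m_le, ℓ, q, hf⟩ := qrank_le_iff_exists_eq_sum.mp h
  refine ⟨LinearMap.ker (LinearMap.pi ℓ), ?_, fun w hw => ?_⟩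
  · calc Module.rank k (V ⧸ LinearMap.ker (LinearMap.pi ℓ))
        ≤ Fintype.card (Fin m) := rank_quotient_ker_pi_le_card ℓ
      _ ≤ r := by simpa using m_le
  · have ℓ_w (i : Fin m) : ℓ i w = 0 := congrFun (LinearMap.mem_ker.mp hw) i
    simp [hf, ℓ_w]

theorem qrank_le_finrank_quotient (T : V →ₗ[k] V →ₗ[k] V →ₗ[k] k) (W : Submodule k V)
    [Module.Finite k (V ⧸ W)] (hW : ∀ w ∈ W, T w w w = 0) :
    qrank k (fun v => T v v v) ≤ Module.finrank k (V ⧸ W) := by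
  let b := Module.finBasis k (V ⧸ W)
  obtain ⟨e, p, p_mem, eq_sum_add⟩ := exists_eq_sum_repr_smul_add_mem W b
  refine qrank_le_iff_exists_eq_sum.mpr
    ⟨_, le_rfl, fun i => b.coord i ∘ₗ W.mkQ, fun i => cubicCofactor T p (e i), fun v => ?_⟩
  calc T v v v
      = cubicCofactor T p (∑ i, b.repr (W.mkQ v) i • e i) v + T (p v) (p v) (p v) :=
        trilinear_apply_self_eq_cubicCofactor_add T p (eq_sum_add v)
    _ = ∑ i, b.repr (W.mkQ v) i • cubicCofactor T p (e i) v := by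
        rw [hW _ (p_mem v), add_zero, cubicCofactor_sum_smul]

theorem qrank_le_iff_vanishes_on_codim_general (T : V →ₗ[k] V →ₗ[k] V →ₗ[k] k) (r : ℕ) :
    qrank k (fun v => T v v v) ≤ r ↔
      ∃ W : Submodule k V, Module.rank k (V ⧸ W) ≤ r ∧ ∀ w ∈ W, T w w w = 0 := by
  refine ⟨exists_rank_quotient_le_of_qrank_le, ?_⟩
  rintro ⟨W, rank_le, hW⟩
  have : Module.Finite k (V ⧸ W) :=
    Module.rank_lt_aleph0_iff.mp (rank_le.trans_lt Cardinal.natCast_lt_aleph0)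
  calc qrank k (fun v => T v v v)
      ≤ Module.finrank k (V ⧸ W) := qrank_le_finrank_quotient T W hW
    _ ≤ r := by exact_mod_cast Module.finrank_le_of_rank_le rank_le

end QRank

/-- Geometric characterization of q-rank:  iff  vanishes on a
subspace of codimension at most . -/
theorem qrank_le_iff_vanishes_on_codim {k : Type*} [Field k] [IsAlgClosed k]
    (h2 : (2 : k) ≠ 0) (h3 : (3 : k) ≠ 0)
    {V : Type*} [AddCommGroup V] [Module k V] (f : V → k)
    (hf : IsCubicForm k f) (r : ℕ) :
    qrank k f ≤ r ↔
      ∃ W : Submodule k V, Module.rank k (V ⧸ W) ≤ r ∧ ∀ w ∈ W, f w = 0 := by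
  obtain ⟨T, -, -, hT⟩ := hf
  obtain rfl : f = fun v => T v v v := funext hT
  exact qrank_le_iff_vanishes_on_codim_general T r
end

section
/- Maxrank inequality: let V be a finite-dimensional k-vector space, and suppose the cubic form f on V has q-rank r and admits an expression f(v) = Σ_{i=1}^n ℓᵢ(v)·qᵢ(v) with ℓᵢ linear functionals and qᵢ quadratic forms on V. Let Q be the linear span of q₁,…,q_n inside the space of quadratic forms on V. Then for every linear subspace Q' ⊆ Q there exists q ∈ Q' with dim(Q/Q') + rank(q) ≥ r. -/
open scoped BigOperators

/-- The rank of a quadratic form: `dim V` minus the dimension of its radical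
(the kernel of the polar bilinear form). -/
noncomputable def quadRank {k V : Type*} [Field k] [AddCommGroup V] [Module k V]
    (q : QuadraticForm k V) : ℕ :=
  Module.finrank k V - Module.finrank k (LinearMap.ker (QuadraticMap.polarBilin q))

/-!
Choose `p ∈ Q'` of maximal rank. In a linear pencil `A + t B` over an infinite field, maximality of
the rank of `A` forces `B` to map `ker A` into `range A`; applied to polar forms, this makes every
element of `Q'` vanish on the radical `W` of `p`. Splitting `Q` as `Q' ⊕ C` splits `f` into a
part with coefficients in `C`, of q-rank at most `dim C`, and a part with coefficients in `Q'`.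
The latter has q-rank at most `codim W = rank p`, because a quadratic form vanishing on `W` lies in
the ideal generated by the linear equations of `W`.
-/

open Module

section LinearAlgebra

variable {k U V W : Type*} [Field k] [AddCommGroup U] [Module k U] [AddCommGroup V] [Module k V]
  [AddCommGroup W] [Module k W]

theorem exists_fin_finrank_span_range_eq (S : Submodule k V) [FiniteDimensional k S] :
    ∃ g : Fin (finrank k S) → V, Submodule.span k (Set.range g) = S := by
  refine ⟨S.subtype ∘ finBasis k S, ?_⟩
  rw [Set.range_comp, Submodule.span_image, (finBasis k S).span_eq, Submodule.map_subtype_top]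

theorem exists_sup_eq_and_finrank_eq_sub {S T : Submodule k V} [FiniteDimensional k T]
    (hST : S ≤ T) : ∃ C : Submodule k V, S ⊔ C = T ∧ finrank k C = finrank k T - finrank k S := by
  obtain ⟨C, hdisj, rfl⟩ := IsModularLattice.exists_disjoint_and_sup_eq hST
  have : FiniteDimensional k S := Submodule.finiteDimensional_of_le hST
  have : FiniteDimensional k C := Submodule.finiteDimensional_of_le (le_sup_right (a := S))
  have hdim := Submodule.finrank_sup_add_finrank_inf_eq S C
  rw [hdisj.eq_bot, finrank_bot, add_zero] at hdim
  exact ⟨C, rfl, (Nat.sub_eq_of_eq_add' hdim).symm⟩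

theorem finite_setOf_not_injective_add_smul [FiniteDimensional k U] {A : U →ₗ[k] W}
    (hA : Function.Injective A) (B : U →ₗ[k] W) :
    {t : k | ¬ Function.Injective (A + t • B)}.Finite := by
  obtain ⟨P, hPA⟩ := A.exists_leftInverse_of_injective (LinearMap.ker_eq_bot.mpr hA)
  have hinj : Function.Injective fun t : k => -t⁻¹ := neg_injective.comp inv_injective
  refine ((End.finite_hasEigenvalue (P ∘ₗ B)).preimage hinj.injOn).subset fun t ht => ?_
  obtain ⟨u, hu, hu0⟩ : ∃ u, (A + t • B) u = 0 ∧ u ≠ 0 := by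
    simpa [injective_iff_map_eq_zero] using ht
  have ht0 : t ≠ 0 := by
    rintro rfl
    exact hu0 (hA (by simpa using hu))
  have hsum : u + t • P (B u) = 0 := by
    have hPAu : P (A u) = u := LinearMap.congr_fun hPA u
    simpa [hPAu] using congrArg P hu
  refine End.hasEigenvalue_of_hasEigenvector (x := u) ⟨End.mem_eigenspace_iff.mpr ?_, hu0⟩
  calc P (B u) = t⁻¹ • t • P (B u) := (inv_smul_smul₀ ht0 _).symm
    _ = -t⁻¹ • u := by rw [eq_neg_of_add_eq_zero_right hsum, smul_neg, neg_smul]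

theorem exists_finrank_range_lt_finrank_range_add_smul [Infinite k] [FiniteDimensional k V]
    {A B : V →ₗ[k] W} {u : V} (hu : u ∈ LinearMap.ker A) (hBu : B u ∉ LinearMap.range A) :
    ∃ t : k, finrank k (LinearMap.range A) < finrank k (LinearMap.range (A + t • B)) := by
  obtain ⟨s, hs⟩ := A.rangeRestrict.exists_rightInverse_of_surjective A.range_rangeRestrict
  have hAs (w : LinearMap.range A) : A (s w) = w :=
    congrArg Subtype.val (LinearMap.congr_fun hs w)
  -- `F + t • G` is injective at `t = 0`, hence for almost all `t`, while for `t ≠ 0` its range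
  -- lies in that of `A + t • B` since `B u = (A + t • B) (t⁻¹ • u)`.
  let F : LinearMap.range A × k →ₗ[k] W :=
    (LinearMap.range A).subtype.coprod (LinearMap.toSpanSingleton k W (B u))
  let G : LinearMap.range A × k →ₗ[k] W := (B ∘ₗ s).coprod 0
  have hF : Function.Injective F := by
    have hBu0 : B u ≠ 0 := fun h => hBu (h ▸ zero_mem _)
    rw [← LinearMap.ker_eq_bot, LinearMap.ker_coprod_of_disjoint_range, Submodule.ker_subtype,
      LinearMap.ker_toSpanSingleton k hBu0, Submodule.prod_bot]
    rw [Submodule.range_subtype, LinearMap.range_toSpanSingleton]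
    exact (Submodule.disjoint_span_singleton' hBu0).mpr hBu
  obtain ⟨t, ht⟩ := ((finite_setOf_not_injective_add_smul hF G).insert 0).exists_notMem
  obtain ⟨ht0, hFG⟩ : t ≠ 0 ∧ Function.Injective (F + t • G) := by simpa using ht
  have hrange : LinearMap.range (F + t • G) ≤ LinearMap.range (A + t • B) := by
    rintro _ ⟨⟨w, c⟩, rfl⟩
    refine ⟨s w + (t⁻¹ * c) • u, ?_⟩
    simp [F, G, hAs, LinearMap.mem_ker.mp hu, smul_smul, ht0, ← add_assoc, add_right_comm]
  refine ⟨t, Nat.lt_of_succ_le ?_⟩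
  calc finrank k (LinearMap.range A) + 1
      = finrank k (LinearMap.range A × k) := by rw [finrank_prod, finrank_self]
    _ = finrank k (LinearMap.range (F + t • G)) := (LinearMap.finrank_range_of_inj hFG).symm
    _ ≤ finrank k (LinearMap.range (A + t • B)) := Submodule.finrank_mono hrange

end LinearAlgebra

section QuadRank

variable {k V : Type*} [Field k] [AddCommGroup V] [Module k V]

theorem exists_mem_forall_quadRank_le (S : Submodule k (QuadraticForm k V)) :
    ∃ p ∈ S, ∀ q ∈ S, quadRank q ≤ quadRank p := by
  have hfinite : (quadRank '' (S : Set (QuadraticForm k V))).Finite :=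
    (Set.finite_Iic (finrank k V)).subset <| by
      rintro _ ⟨p, -, rfl⟩
      exact Nat.sub_le _ _
  obtain ⟨p, hp, hmax⟩ := hfinite.exists_maximalFor' quadRank _ S.nonempty
  exact ⟨p, hp, fun q hq => (le_total _ _).elim id (hmax hq)⟩

variable [FiniteDimensional k V]

theorem quadRank_eq_finrank_range_polarBilin (p : QuadraticForm k V) :
    quadRank p = finrank k (LinearMap.range p.polarBilin) :=
  (Nat.eq_sub_of_add_eq p.polarBilin.finrank_range_add_finrank_ker).symm

theorem quadRank_eq_finrank_quotient (p : QuadraticForm k V) :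
    quadRank p = finrank k (V ⧸ LinearMap.ker p.polarBilin) :=
  (Submodule.finrank_quotient _).symm

theorem apply_eq_zero_of_forall_quadRank_add_smul_le [Infinite k] (h2 : (2 : k) ≠ 0)
    {p q : QuadraticForm k V} (hmax : ∀ t : k, quadRank (p + t • q) ≤ quadRank p)
    {u : V} (hu : u ∈ LinearMap.ker p.polarBilin) : q u = 0 := by
  have hrange : q.polarBilin u ∈ LinearMap.range p.polarBilin := by
    by_contra hnot
    obtain ⟨t, ht⟩ := exists_finrank_range_lt_finrank_range_add_smul hu hnot
    have hpolar : (p + t • q).polarBilin = p.polarBilin + t • q.polarBilin := by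
      ext x y
      simp [QuadraticMap.polar_add, QuadraticMap.polar_smul]
    have := hmax t
    rw [quadRank_eq_finrank_range_polarBilin, quadRank_eq_finrank_range_polarBilin, hpolar] at this
    exact this.not_gt ht
  obtain ⟨w, hw⟩ := hrange
  have hself : 2 * q u = 0 := calc
    2 * q u = q.polarBilin u u := by simp [QuadraticMap.polar_self]
    _ = p.polarBilin w u := by rw [hw]
    _ = p.polarBilin u w := by simp [QuadraticMap.polar_comm]
    _ = 0 := by rw [LinearMap.mem_ker.mp hu, LinearMap.zero_apply]
  exact (mul_eq_zero.mp hself).resolve_left h2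

theorem exists_mem_forall_vanishing_on_ker_polarBilin [Infinite k] (h2 : (2 : k) ≠ 0)
    (S : Submodule k (QuadraticForm k V)) :
    ∃ p ∈ S, ∀ q ∈ S, ∀ u ∈ LinearMap.ker p.polarBilin, q u = 0 := by
  obtain ⟨p, hp, hmax⟩ := exists_mem_forall_quadRank_le S
  exact ⟨p, hp, fun q hq _ => apply_eq_zero_of_forall_quadRank_add_smul_le h2
    fun t => hmax _ (S.add_mem hp (S.smul_mem t hq))⟩

end QuadRank

section QRank

variable {k V ι : Type*} [Field k] [AddCommGroup V] [Module k V] [Fintype ι]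

theorem qrank_le_card {f : V → k} (ℓ : ι → V →ₗ[k] k) (q : ι → QuadraticForm k V)
    (hf : ∀ v, f v = ∑ i, ℓ i v * q i v) : qrank k f ≤ Fintype.card ι := by
  let e := (Fintype.equivFin ι).symm
  exact sInf_le ⟨_, rfl, ℓ ∘ e, q ∘ e, fun v =>
    (hf v).trans (e.sum_comp fun i => ℓ i v * q i v).symm⟩

theorem exists_eq_sum_mul_of_qrank_ne_top {f : V → k} (hf : qrank k f ≠ ⊤) :
    ∃ m : ℕ, qrank k f = m ∧ ∃ (ℓ : Fin m → V →ₗ[k] k) (q : Fin m → QuadraticForm k V),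
      ∀ v, f v = ∑ i, ℓ i v * q i v := by
  rw [qrank, Ne, sInf_eq_top] at hf
  push Not at hf
  obtain ⟨r, hr, -⟩ := hf
  exact csInf_mem ⟨r, hr⟩

theorem qrank_add_le (f g : V → k) : qrank k (f + g) ≤ qrank k f + qrank k g := by
  by_cases hf : qrank k f = ⊤
  · simp [hf]
  by_cases hg : qrank k g = ⊤
  · simp [hg]
  obtain ⟨m, hm, ℓ, q, hfq⟩ := exists_eq_sum_mul_of_qrank_ne_top hf
  obtain ⟨n, hn, ℓ', q', hgq⟩ := exists_eq_sum_mul_of_qrank_ne_top hg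
  have := qrank_le_card (f := f + g) (Sum.elim ℓ ℓ') (Sum.elim q q') fun v => by
    simp [hfq, hgq]
  simpa [hm, hn] using this

theorem qrank_sum_mul_le_finrank (S : Submodule k (QuadraticForm k V)) [FiniteDimensional k S]
    (ℓ : ι → V →ₗ[k] k) {q : ι → QuadraticForm k V} (hq : ∀ i, q i ∈ S) :
    qrank k (fun v => ∑ i, ℓ i v * q i v) ≤ finrank k S := by
  obtain ⟨g, hg⟩ := exists_fin_finrank_span_range_eq S
  have hcoeff (i : ι) : ∃ a : Fin (finrank k S) → k, ∑ j, a j • g j = q i :=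
    (Submodule.mem_span_range_iff_exists_fun k).mp (hg.ge (hq i))
  choose a ha using hcoeff
  have hqa (i : ι) (v : V) : q i v = ∑ j, a i j * g j v := by
    simp [← ha]
  refine (qrank_le_card (fun j => ∑ i, a i j • ℓ i) g fun v => ?_).trans_eq (by simp)
  simp only [hqa, LinearMap.sum_apply, LinearMap.smul_apply, smul_eq_mul, Finset.mul_sum,
    Finset.sum_mul]
  rw [Finset.sum_comm]
  exact Finset.sum_congr rfl fun j _ => Finset.sum_congr rfl fun i _ => by ring

theorem exists_eq_sum_mul_of_vanishing (x : ι → V →ₗ[k] k) {p : QuadraticForm k V}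
    (hp : ∀ v, (∀ j, x j v = 0) → p v = 0) :
    ∃ y : ι → V →ₗ[k] k, ∀ v, p v = ∑ j, x j v * y j v := by
  classical
  let X : V →ₗ[k] ι → k := LinearMap.pi x
  obtain ⟨σ, hσ⟩ := X.rangeRestrict.exists_rightInverse_of_surjective X.range_rangeRestrict
  obtain ⟨s, hs⟩ := σ.exists_extend
  let e (j : ι) : V := s (Pi.single j 1)
  have hsX (v : V) : s (X v) = ∑ j, x j v • e j := by
    conv_lhs => rw [pi_eq_sum_univ' (X v), map_sum]
    simp [X, e]
  have hXsX (v : V) : X (s (X v)) = X v := by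
    have hext : s (X v) = σ (X.rangeRestrict v) := LinearMap.congr_fun hs (X.rangeRestrict v)
    rw [hext]
    exact congrArg Subtype.val (LinearMap.congr_fun hσ (X.rangeRestrict v))
  obtain ⟨B, rfl⟩ := LinearMap.BilinMap.toQuadraticMap_surjective p
  refine ⟨fun j => B (e j) + B.flip (e j) ∘ₗ (LinearMap.id - s ∘ₗ X), fun v => ?_⟩
  have hvanish : B (v - s (X v)) (v - s (X v)) = 0 :=
    hp _ fun j => by simpa [sub_eq_zero, X] using congrFun (hXsX v).symm j
  calc B v v
      = B (s (X v)) v + B (v - s (X v)) (s (X v)) + B (v - s (X v)) (v - s (X v)) := by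
        simp only [map_sub, LinearMap.sub_apply]
        ring
    _ = B (∑ j, x j v • e j) v + B (v - s (X v)) (∑ j, x j v • e j) := by
        rw [hvanish, add_zero, ← hsX]
    _ = _ := by
        simp [mul_add, Finset.sum_add_distrib]

theorem qrank_sum_mul_le_finrank_quotient (W : Submodule k V) [FiniteDimensional k (V ⧸ W)]
    (ℓ : ι → V →ₗ[k] k) {q : ι → QuadraticForm k V} (hq : ∀ i, ∀ w ∈ W, q i w = 0) :
    qrank k (fun v => ∑ i, ℓ i v * q i v) ≤ finrank k (V ⧸ W) := by
  let b := finBasis k (V ⧸ W)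
  let x (j : Fin (finrank k (V ⧸ W))) : V →ₗ[k] k := b.coord j ∘ₗ W.mkQ
  have hx (v : V) (hv : ∀ j, x j v = 0) : v ∈ W :=
    (Submodule.Quotient.mk_eq_zero W).mp (b.forall_coord_eq_zero_iff.mp hv)
  choose y hy using fun i => exists_eq_sum_mul_of_vanishing x fun v hv => hq i v (hx v hv)
  refine (qrank_le_card x (fun j => ∑ i, QuadraticMap.linMulLin (ℓ i) (y i j))
    fun v => ?_).trans_eq (by simp)
  simp only [hy, _root_.sum_apply, QuadraticMap.linMulLin_apply, Finset.mul_sum]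
  rw [Finset.sum_comm]
  exact Finset.sum_congr rfl fun j _ => Finset.sum_congr rfl fun i _ => by ring

end QRank

theorem maxrank_inequality_general {k V ι : Type*} [Field k] [Infinite k] (h2 : (2 : k) ≠ 0)
    [AddCommGroup V] [Module k V] [FiniteDimensional k V] [Fintype ι]
    (f : V → k) (ℓ : ι → V →ₗ[k] k) (q : ι → QuadraticForm k V)
    (hexp : ∀ v, f v = ∑ i, ℓ i v * q i v)
    (Q' : Submodule k (QuadraticForm k V)) (hQ' : Q' ≤ Submodule.span k (Set.range q)) :
    ∃ p ∈ Q', qrank k f ≤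
      ((finrank k (Submodule.span k (Set.range q)) - finrank k Q' + quadRank p : ℕ) : ℕ∞) := by
  obtain ⟨p, hp, hvanish⟩ := exists_mem_forall_vanishing_on_ker_polarBilin h2 Q'
  have : FiniteDimensional k (Submodule.span k (Set.range q)) :=
    FiniteDimensional.span_of_finite k (Set.finite_range q)
  obtain ⟨C, hsup, hdim⟩ := exists_sup_eq_and_finrank_eq_sub hQ'
  have : FiniteDimensional k C := Submodule.finiteDimensional_of_le (hsup ▸ le_sup_right)
  have hdecomp (i : ι) : ∃ s ∈ Q', ∃ c ∈ C, s + c = q i :=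
    Submodule.mem_sup.mp (hsup ▸ Submodule.subset_span (Set.mem_range_self i))
  choose s hs c hc hsc using hdecomp
  have hf : f = (fun v => ∑ i, ℓ i v * c i v) + fun v => ∑ i, ℓ i v * s i v := by
    ext v
    simp [hexp, ← hsc, mul_add, Finset.sum_add_distrib, add_comm]
  refine ⟨p, hp, ?_⟩
  rw [hf, ← hdim, quadRank_eq_finrank_quotient, Nat.cast_add]
  exact (qrank_add_le _ _).trans <| add_le_add (qrank_sum_mul_le_finrank C ℓ hc)
    (qrank_sum_mul_le_finrank_quotient _ ℓ fun i => hvanish _ (hs i))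

/-- Maxrank inequality: if the cubic form `f = ∑ ℓᵢ qᵢ` has q-rank `r` and `Q` is the span
of the `qᵢ`, then every subspace `Q' ⊆ Q` contains a form `q` with
`dim(Q/Q') + rank(q) ≥ r`. -/
theorem maxrank_inequality {k : Type*} [Field k] [IsAlgClosed k]
    (h2 : (2 : k) ≠ 0) (h3 : (3 : k) ≠ 0)
    {V : Type*} [AddCommGroup V] [Module k V] [FiniteDimensional k V]
    (f : V → k) {n : ℕ} (ℓ : Fin n → (V →ₗ[k] k)) (q : Fin n → QuadraticForm k V)
    (hexp : ∀ v, f v = ∑ i, ℓ i v * q i v)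
    (r : ℕ) (hr : qrank k f = (r : ℕ∞))
    (Q' : Submodule k (QuadraticForm k V))
    (hQ' : Q' ≤ Submodule.span k (Set.range q)) :
    ∃ p ∈ Q',
      r ≤ (Module.finrank k (Submodule.span k (Set.range q)) - Module.finrank k Q')
            + quadRank p := by
  have : Infinite k := IsAlgClosed.instInfinite
  simpa only [hr, Nat.cast_le] using maxrank_inequality_general h2 f ℓ q hexp Q' hQ'
end

section
/- Intermediate-rank lemma for quadratic forms: let V be a finite-dimensional vector space over a field k of characteristic ≠ 2, let s, t be positive integers, and let q₁,…,q_n be quadratic forms on V each of rank at most s − 1. If some k-linear combination of q₁,…,q_n has rank at least t, then there is a k-linear combination q' of q₁,…,q_n with t ≤ rank(q') ≤ t + s − 2. -/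
open scoped BigOperators

/-!
Rank is subadditive, so adding the terms `c i • q i` one at a time changes the rank by at most
`s - 1` per step. The first partial sum whose rank reaches `t` therefore has rank at most
`(t - 1) + (s - 1)`.
-/

section Subadditive

variable {ι M α : Type*} [AddCommMonoid M]
  [AddCommMonoid α] [LinearOrder α] [IsOrderedCancelAddMonoid α]

theorem exists_subset_le_sum_lt_of_subadditive {f : M → α}
    (f_add : ∀ x y, f (x + y) ≤ f x + f y) {p : ι → M} {r t : α} (ht : f 0 < t)
    {S : Finset ι} (hp : ∀ i ∈ S, f (p i) ≤ r) (hS : t ≤ f (∑ i ∈ S, p i)) :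
    ∃ T ⊆ S, t ≤ f (∑ i ∈ T, p i) ∧ f (∑ i ∈ T, p i) < t + r := by
  classical
  induction S using Finset.induction_on with
  | empty => exact absurd hS (by simpa using ht)
  | insert a S ha ih =>
    by_cases h : t ≤ f (∑ i ∈ S, p i)
    · obtain ⟨T, hTS, hT⟩ := ih (fun i hi ↦ hp i (Finset.mem_insert_of_mem hi)) h
      exact ⟨T, hTS.trans (Finset.subset_insert a S), hT⟩
    · refine ⟨insert a S, subset_rfl, hS, ?_⟩
      calc f (∑ i ∈ insert a S, p i)
          = f (∑ i ∈ S, p i + p a) := by rw [Finset.sum_insert ha, add_comm]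
        _ ≤ f (∑ i ∈ S, p i) + f (p a) := f_add _ _
        _ < t + r := add_lt_add_of_lt_of_le (not_le.mp h) (hp a (Finset.mem_insert_self a S))

end Subadditive

section PolarBilin

variable {R M N : Type*} [CommRing R] [AddCommGroup M] [Module R M] [AddCommGroup N] [Module R N]

theorem polarBilin_zero : (0 : QuadraticMap R M N).polarBilin = 0 :=
  LinearMap.ext₂ fun _ _ ↦ by simp [QuadraticMap.polar]

theorem polarBilin_add (p q : QuadraticMap R M N) :
    (p + q).polarBilin = p.polarBilin + q.polarBilin :=
  LinearMap.ext₂ fun _ _ ↦ by simp [QuadraticMap.polar_add]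

theorem polarBilin_smul (a : R) (q : QuadraticMap R M N) :
    (a • q).polarBilin = a • q.polarBilin :=
  LinearMap.ext₂ fun _ _ ↦ by simp [QuadraticMap.polar_smul]

end PolarBilin

section QuadRank

variable {k V : Type*} [Field k] [AddCommGroup V] [Module k V]

theorem quadRank_zero : quadRank (0 : QuadraticForm k V) = 0 := by
  rw [quadRank, polarBilin_zero, LinearMap.ker_zero, finrank_top, Nat.sub_self]

variable [FiniteDimensional k V]

theorem quadRank_eq_finrank_range (q : QuadraticForm k V) :
    quadRank q = Module.finrank k q.polarBilin.range :=
  Nat.sub_eq_of_eq_add q.polarBilin.finrank_range_add_finrank_ker.symm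

theorem quadRank_add_le (p q : QuadraticForm k V) :
    quadRank (p + q) ≤ quadRank p + quadRank q := by
  rw [quadRank_eq_finrank_range, quadRank_eq_finrank_range, quadRank_eq_finrank_range,
    polarBilin_add]
  exact (Submodule.finrank_mono (LinearMap.range_add_le _ _)).trans
    (Submodule.finrank_add_le_finrank_add_finrank _ _)

theorem quadRank_smul_le (a : k) (q : QuadraticForm k V) : quadRank (a • q) ≤ quadRank q := by
  rw [quadRank_eq_finrank_range, quadRank_eq_finrank_range, polarBilin_smul]
  exact Submodule.finrank_mono (LinearMap.range_smul_le_range _ a)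

theorem intermediate_rank_general {ι : Type*} [Fintype ι] {r t : ℕ} (ht : 0 < t)
    {q : ι → QuadraticForm k V} (hq : ∀ i, quadRank (q i) ≤ r)
    {c : ι → k} (hc : t ≤ quadRank (∑ i, c i • q i)) :
    ∃ c' : ι → k, t ≤ quadRank (∑ i, c' i • q i) ∧ quadRank (∑ i, c' i • q i) < t + r := by
  classical
  obtain ⟨T, -, hT⟩ := exists_subset_le_sum_lt_of_subadditive quadRank_add_le
    (quadRank_zero.trans_lt ht) (fun i _ ↦ (quadRank_smul_le (c i) (q i)).trans (hq i)) hc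
  have sum_restrict : ∑ i, (if i ∈ T then c i else 0) • q i = ∑ i ∈ T, c i • q i := by
    simp only [ite_smul, zero_smul, Finset.sum_ite_mem, Finset.univ_inter]
  exact ⟨fun i ↦ if i ∈ T then c i else 0, sum_restrict.symm ▸ hT⟩

end QuadRank

/-- Intermediate-rank lemma: if each `qᵢ` has rank at most `s - 1` and some linear
combination has rank at least `t`, then some linear combination `q'` satisfies
`t ≤ rank q' ≤ t + s - 2`. -/
theorem intermediate_rank {k : Type*} [Field k]
    (h2 : (2 : k) ≠ 0)
    {V : Type*} [AddCommGroup V] [Module k V] [FiniteDimensional k V]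
    (s t : ℕ) (hs : 0 < s) (ht : 0 < t)
    {n : ℕ} (q : Fin n → QuadraticForm k V)
    (hq : ∀ i, quadRank (q i) ≤ s - 1)
    (c : Fin n → k) (hc : t ≤ quadRank (∑ i, c i • q i)) :
    ∃ c' : Fin n → k,
      t ≤ quadRank (∑ i, c' i • q i) ∧ quadRank (∑ i, c' i • q i) ≤ t + s - 2 := by
  obtain ⟨c', hle, hlt⟩ := intermediate_rank_general ht hq hc
  exact ⟨c', hle, by omega⟩
end

section
/- Quantitative surjectivity of orbit closures: let f ∈ P₃(kⁿ) have q-rank r, and let d ≤ n be a natural number satisfying 2·((2^d − 1)(d²·2^d + 2(d+1)d − 1) + d) ≤ ξ(r). Then the Zariski closure of the GLₙ(k)-orbit of f surjects onto P₃(k^d): for every homogeneous degree-3 polynomial h in the first d variables there exists g in the Zariski closure of the GLₙ(k)-orbit of f with π_d(g) = h. -/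
open scoped BigOperators

/-- The q-rank of a multivariate polynomial `f`: the least `m` such that
`f = ∑ ℓᵢ · qᵢ` with each `ℓᵢ` homogeneous of degree 1 and each `qᵢ` homogeneous
of degree 2, as an element of `ℕ∞`. -/
noncomputable def polyQRank {k : Type*} [Field k] {n : ℕ}
    (f : MvPolynomial (Fin n) k) : ℕ∞ :=
  sInf {r : ℕ∞ | ∃ m : ℕ, r = m ∧
    ∃ ℓ q : Fin m → MvPolynomial (Fin n) k,
      (∀ i, (ℓ i).IsHomogeneous 1) ∧ (∀ i, (q i).IsHomogeneous 2) ∧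
        f = ∑ i, ℓ i * q i}

/-- The action of `GLₙ(k)` on `MvPolynomial (Fin n) k` by invertible linear
substitution of the variables. -/
noncomputable def glAct {k : Type*} [Field k] {n : ℕ} (g : GL (Fin n) k)
    (f : MvPolynomial (Fin n) k) : MvPolynomial (Fin n) k :=
  MvPolynomial.aeval
    (fun j => ∑ i, MvPolynomial.C ((g : Matrix (Fin n) (Fin n) k) i j) *
      MvPolynomial.X i) f

/-- The `GLₙ(k)`-orbit of a polynomial. -/
def glOrbit {k : Type*} [Field k] {n : ℕ} (f : MvPolynomial (Fin n) k) :
    Set (MvPolynomial (Fin n) k) :=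
  {h | ∃ g : GL (Fin n) k, h = glAct g f}

/-- `g` lies in the Zariski closure of `S ⊆ MvPolynomial (Fin n) k`: every polynomial
in the coefficients (coordinates w.r.t. the monomial basis) vanishing on `S`
vanishes at `g`. -/
def InZariskiClosure {k : Type*} [Field k] {n : ℕ}
    (S : Set (MvPolynomial (Fin n) k)) (g : MvPolynomial (Fin n) k) : Prop :=
  ∀ P : MvPolynomial (Fin n →₀ ℕ) k,
    (∀ f ∈ S, MvPolynomial.eval (fun m => MvPolynomial.coeff m f) P = 0) →
    MvPolynomial.eval (fun m => MvPolynomial.coeff m g) P = 0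

/-- `ξ(d) = ⌊(√(8d+17) − 3)/2⌋`. -/
noncomputable def xi (d : ℕ) : ℕ := ⌊(Real.sqrt (8 * d + 17) - 3) / 2⌋₊

/-- The restriction map `π_d : P₃(kⁿ) → P₃(k^d)`: substitute `0` for all variables
of index `≥ d`. -/
noncomputable def restrictVars {k : Type*} [Field k] {n : ℕ} (d : ℕ)
    (f : MvPolynomial (Fin n) k) : MvPolynomial (Fin d) k :=
  MvPolynomial.aeval
    (fun i : Fin n => if h : (i : ℕ) < d then MvPolynomial.X ⟨i, h⟩ else 0) f

/-!
Let `F` be the third polar form of `f`. Take vectors `w₁, …, w_N` with indeterminate coordinates and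
suppose that the linear forms `F(wₐ, w_b, ·)`, one for each unordered pair, satisfy a nontrivial
relation `∑ c_{ab} F(wₐ, w_b, ·) = 0`. Let `K` be their common kernel and `A` the space of all `x`
with `F(x, κ, κ') = 0` for `κ, κ' ∈ K`. Differentiating the relation in the direction `v` of `w_b`
shows that `u_b = ∑ₐ c_{ab} wₐ` satisfies `F(u_b, v, κ) = 0` for all `v` and all `κ ∈ K`.
Differentiating this identity in turn shows that every derivative of `u_b` lies in `A`; as such a
derivative is `c_{ab} v` plus a combination of the `wₐ`, which are themselves dependent modulo `A`,
the codimension of `A` is less than `N`. Now `f` vanishes on `K ∩ A`, whose codimension is at most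
`N(N + 1)/2 + N - 2`, and after specializing the indeterminates to scalars this codimension bounds
the q-rank. Hence for `N ≤ ξ(r)` some `w₁, …, w_N ∈ kⁿ` have independent forms `F(wₐ, w_b, ·)`, so
that every symmetric bilinear form on their span `W` is `F(·, ·, v)` for some `v`.

If `N ≥ 2(2ᵈ - 1)`, then `f` vanishes on a `d`-dimensional subspace of `W`, the image of some
injective `θ`, and there is a linear `ψ` with `F(θ x, θ x, ψ x) = 2 h(x)`. Then
`t⁻¹ f(θ x + t ψ x) = h(x) + O(t)`, and since `t` has a cube root the left-hand side arises from `f`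
by a linear substitution; letting `t → 0` puts an extension of `h` into the orbit closure.
-/

open Module MvPolynomial

section RankOverDomain

variable {R M : Type*} [CommRing R] [IsDomain R] [AddCommGroup M] [Module R M] [Module.Finite R M]

lemma finrank_le_finrank_ker_add_card {σ : Type*} [Fintype σ] (φ : σ → M →ₗ[R] R) :
    finrank R M ≤ finrank R ↥(⨅ i, LinearMap.ker (φ i)) + Fintype.card σ := by
  rw [← LinearMap.ker_pi, ← Submodule.finrank_quotient_add_finrank (LinearMap.ker (LinearMap.pi φ)),
    (LinearMap.pi φ).quotKerEquivRange.finrank_eq, add_comm]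
  gcongr
  simpa using Submodule.finrank_le (LinearMap.range (LinearMap.pi φ))

lemma finrank_lt_finrank_ker_add_card_of_not_linearIndependent {σ : Type*} [Fintype σ]
    {φ : σ → M →ₗ[R] R} (hφ : ¬LinearIndependent R φ) :
    finrank R M < finrank R ↥(⨅ i, LinearMap.ker (φ i)) + Fintype.card σ := by
  classical
  obtain ⟨c, h, i, hi⟩ := Fintype.not_linearIndependent_iff.1 hφ
  have hker : ⨅ j, LinearMap.ker (φ j) = ⨅ j : {j // j ≠ i}, LinearMap.ker (φ j) := by
    refine le_antisymm (le_iInf fun j ↦ iInf_le _ (j : σ)) (le_iInf fun j x hx ↦ ?_)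
    simp only [Submodule.mem_iInf, LinearMap.mem_ker, Subtype.forall] at hx ⊢
    by_cases hj : j = i
    · subst hj
      have hx' := LinearMap.congr_fun h x
      simp only [LinearMap.sum_apply, LinearMap.smul_apply, smul_eq_mul,
        LinearMap.zero_apply] at hx'
      rw [Fintype.sum_eq_single j fun l hl ↦ by rw [hx l hl, mul_zero]] at hx'
      exact (mul_eq_zero.1 hx').resolve_left hi
    · exact hx j hj
  have hle := finrank_le_finrank_ker_add_card fun j : {j // j ≠ i} ↦ φ j
  have hcard := Fintype.card_subtype_lt (p := (· ≠ i)) (x := i) (by simp)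
  rw [hker]
  lia

variable [IsNoetherianRing R]

lemma finrank_sup_add_finrank_inf (s t : Submodule R M) :
    finrank R ↥(s ⊔ t) + finrank R ↥(s ⊓ t) = finrank R s + finrank R t := by
  have h := Submodule.rank_sup_add_rank_inf_eq s t
  simp only [← finrank_eq_rank] at h
  exact_mod_cast h

lemma finrank_add_finrank_le_finrank_inf_add (s t : Submodule R M) :
    finrank R s + finrank R t ≤ finrank R ↥(s ⊓ t) + finrank R M := by
  have := finrank_sup_add_finrank_inf s t
  have := Submodule.finrank_le (s ⊔ t)
  lia

lemma finrank_le_finrank_add_of_smul_mem_sup [IsTorsionFree R M] {s t : Submodule R M} {c : R}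
    (hc : c ≠ 0) (h : ∀ v, c • v ∈ s ⊔ t) : finrank R M ≤ finrank R s + finrank R t := by
  have hinj : Function.Injective ((LinearMap.lsmul R M c).codRestrict (s ⊔ t) h) :=
    (LinearMap.injective_codRestrict_iff _).2 (smul_right_injective M hc)
  have := LinearMap.finrank_le_finrank_of_injective hinj
  have := finrank_sup_add_finrank_inf s t
  lia

end RankOverDomain

section IsotropicSubspaces

variable {k V : Type*} [Field k] [AddCommGroup V] [Module k V]

section

variable [IsAlgClosed k]

lemma exists_ne_zero_of_one_lt_finrank {Q : V → k} {W : Submodule k V} (hW : 1 < finrank k W)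
    (hQ : ∀ x y, Q y ≠ 0 → ∃ p : Polynomial k, p.degree ≠ 0 ∧ ∀ t, p.eval t = Q (x + t • y)) :
    ∃ v ∈ W, v ≠ 0 ∧ Q v = 0 := by
  obtain ⟨⟨x, y⟩, hxy⟩ : ∃ z : W × W, LinearIndependent k ![z.1, z.2] := by
    obtain ⟨z, hz⟩ := exists_linearIndependent_of_le_finrank hW
    exact ⟨(z 0, z 1), by convert hz using 1; ext i; fin_cases i <;> rfl⟩
  rw [LinearIndependent.pair_iff] at hxy
  by_cases hy : Q y = 0
  · refine ⟨y, y.2, fun h ↦ ?_, hy⟩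
    simpa using hxy 0 1 (by simpa using h)
  · obtain ⟨p, hp, hpQ⟩ := hQ x y hy
    obtain ⟨t, ht⟩ := IsAlgClosed.exists_root p hp
    refine ⟨x + t • y, (x + t • y).2, fun h ↦ ?_, by rw [← hpQ]; exact ht⟩
    simpa using hxy 1 t (by simpa [Subtype.ext_iff] using h)

lemma exists_isotropic_vector_of_bilin {B : V →ₗ[k] V →ₗ[k] k} (hB : ∀ x y, B x y = B y x)
    {W : Submodule k V} (hW : 1 < finrank k W) : ∃ v ∈ W, v ≠ 0 ∧ B v v = 0 := by
  refine exists_ne_zero_of_one_lt_finrank (Q := fun v ↦ B v v) hW fun x y hy ↦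
    ⟨.C (B y y) * .X ^ 2 + .C (2 * B x y) * .X + .C (B x x), ?_, fun t ↦ ?_⟩
  · rw [Polynomial.degree_quadratic hy]
    decide
  · simp only [Polynomial.eval_add, Polynomial.eval_mul, Polynomial.eval_pow, Polynomial.eval_C,
      Polynomial.eval_X, map_add, map_smul, LinearMap.add_apply, LinearMap.smul_apply,
      smul_eq_mul, hB y x]
    ring

lemma exists_isotropic_vector_of_trilin {F : V →ₗ[k] V →ₗ[k] V →ₗ[k] k}
    (h₁₂ : ∀ x y z, F x y z = F y x z) (h₂₃ : ∀ x y z, F x y z = F x z y)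
    {W : Submodule k V} (hW : 1 < finrank k W) : ∃ v ∈ W, v ≠ 0 ∧ F v v v = 0 := by
  refine exists_ne_zero_of_one_lt_finrank (Q := fun v ↦ F v v v) hW fun x y hy ↦
    ⟨.C (F y y y) * .X ^ 3 + .C (3 * F x y y) * .X ^ 2 + .C (3 * F x x y) * .X + .C (F x x x),
      ?_, fun t ↦ ?_⟩
  · rw [Polynomial.degree_cubic hy]
    decide
  · simp only [Polynomial.eval_add, Polynomial.eval_mul, Polynomial.eval_pow, Polynomial.eval_C,
      Polynomial.eval_X, map_add, map_smul, LinearMap.add_apply, LinearMap.smul_apply,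
      smul_eq_mul, h₁₂ y x, h₂₃ x y x, h₂₃ y y x]
    ring

end

variable [FiniteDimensional k V]

lemma finrank_sup_span_singleton {U : Submodule k V} {v : V} (hv : v ∉ U) :
    finrank k ↥(U ⊔ k ∙ v) = finrank k U + 1 := by
  have h := Submodule.finrank_sup_add_finrank_inf_eq U (k ∙ v)
  have hv0 : v ≠ 0 := fun h0 ↦ hv (h0 ▸ U.zero_mem)
  rw [(Submodule.disjoint_span_singleton_of_notMem hv).eq_bot, finrank_bot,
    finrank_span_singleton hv0] at h
  exact h

lemma exists_le_inf_ker_notMem (W : Submodule k V) (φ : V →ₗ[k] k) {v : V} (hv : v ≠ 0) :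
    ∃ W' ≤ W ⊓ LinearMap.ker φ, v ∉ W' ∧ finrank k W ≤ finrank k W' + 2 := by
  obtain ⟨ψ, hψ⟩ : ∃ ψ : V →ₗ[k] k, ψ v ≠ 0 := by
    simpa using (forall_dual_apply_eq_zero_iff k v).not.2 hv
  let K : Submodule k V := ⨅ i, LinearMap.ker (![φ, ψ] i)
  have hKφ : K ≤ LinearMap.ker φ := iInf_le _ (0 : Fin 2)
  have hKψ : K ≤ LinearMap.ker ψ := iInf_le _ (1 : Fin 2)
  refine ⟨W ⊓ K, inf_le_inf_left W hKφ, fun h ↦ hψ (hKψ h.2), ?_⟩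
  have hW := finrank_add_finrank_le_finrank_inf_add W K
  have hK : finrank k V ≤ finrank k K + 2 := finrank_le_finrank_ker_add_card ![φ, ψ]
  lia

variable [IsAlgClosed k]

lemma exists_isotropic_submodule_of_bilin {B : V →ₗ[k] V →ₗ[k] k} (hB : ∀ x y, B x y = B y x)
    (m : ℕ) (W : Submodule k V) (hW : 2 * m ≤ finrank k W) :
    ∃ U ≤ W, finrank k U = m ∧ ∀ u ∈ U, B u u = 0 := by
  induction m generalizing W with
  | zero => exact ⟨⊥, bot_le, by simp, by simp⟩
  | succ m ih =>
    obtain ⟨v, hvW, hv0, hv⟩ := exists_isotropic_vector_of_bilin hB (W := W) (by lia)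
    obtain ⟨W', hW', hvW', hrank⟩ := exists_le_inf_ker_notMem W (B v) hv0
    obtain ⟨U, hU, hUm, hUB⟩ := ih W' (by lia)
    refine ⟨U ⊔ k ∙ v, sup_le (hU.trans (hW'.trans inf_le_left)) (by simpa using hvW),
      by rw [finrank_sup_span_singleton fun h ↦ hvW' (hU h), hUm], fun u hu ↦ ?_⟩
    obtain ⟨a, ha, b, hb, rfl⟩ := Submodule.mem_sup.1 hu
    obtain ⟨c, rfl⟩ := Submodule.mem_span_singleton.1 hb
    have hva : B v a = 0 := (hW' (hU ha)).2
    simp [hB a v, hva, hUB a ha, hv]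

lemma exists_isotropic_submodule_of_trilin {F : V →ₗ[k] V →ₗ[k] V →ₗ[k] k}
    (h₁₂ : ∀ x y z, F x y z = F y x z) (h₂₃ : ∀ x y z, F x y z = F x z y)
    (d : ℕ) (W : Submodule k V) (hW : 2 * (2 ^ d - 1) ≤ finrank k W) :
    ∃ U ≤ W, finrank k U = d ∧ ∀ u ∈ U, F u u u = 0 := by
  induction d generalizing W with
  | zero => exact ⟨⊥, bot_le, by simp, by simp⟩
  | succ d ih =>
    have hpow : 1 ≤ 2 ^ d := Nat.one_le_two_pow
    rw [pow_succ] at hW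
    obtain ⟨v, hvW, hv0, hv⟩ := exists_isotropic_vector_of_trilin h₁₂ h₂₃ (W := W) (by lia)
    obtain ⟨W₁, hW₁, hvW₁, hrank⟩ := exists_le_inf_ker_notMem W (F v v) hv0
    obtain ⟨W₂, hW₂, hW₂rank, hW₂F⟩ :=
      exists_isotropic_submodule_of_bilin (h₂₃ v) (2 * (2 ^ d - 1)) W₁ (by lia)
    obtain ⟨U, hU, hUd, hUF⟩ := ih W₂ hW₂rank.ge
    refine ⟨U ⊔ k ∙ v, sup_le (hU.trans (hW₂.trans (hW₁.trans inf_le_left))) (by simpa using hvW),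
      by rw [finrank_sup_span_singleton fun h ↦ hvW₁ (hW₂ (hU h)), hUd], fun u hu ↦ ?_⟩
    obtain ⟨a, ha, b, hb, rfl⟩ := Submodule.mem_sup.1 hu
    obtain ⟨c, rfl⟩ := Submodule.mem_span_singleton.1 hb
    have hvva : F v v a = 0 := (hW₁ (hW₂ (hU ha))).2
    have hvaa : F v a a = 0 := hW₂F a (hU ha)
    simp [h₁₂ a v, h₂₃ v a v, hvva, hvaa, h₂₃ a a v, hUF a ha, hv]

end IsotropicSubspaces

section PolarForm

lemma six_ne_zero_of_two_ne_zero_of_three_ne_zero {R : Type*} [Semiring R] [NoZeroDivisors R]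
    (h2 : (2 : R) ≠ 0) (h3 : (3 : R) ≠ 0) : (6 : R) ≠ 0 := by
  rw [show (6 : R) = 2 * 3 by norm_num]
  exact mul_ne_zero h2 h3

lemma pderiv_comm {σ k : Type*} [CommRing k] (i j : σ) (f : MvPolynomial σ k) :
    pderiv i (pderiv j f) = pderiv j (pderiv i f) := by
  classical
  let D (l : σ) : Derivation k (MvPolynomial σ k) (MvPolynomial σ k) := pderiv l
  have hbracket : ⁅D i, D j⁆ = 0 := by
    refine derivation_ext fun l ↦ ?_
    simp only [D, Derivation.commutator_apply, pderiv_X, Pi.single_apply, Derivation.zero_apply]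
    split_ifs <;> simp
  have hf := congr($hbracket f)
  rwa [Derivation.commutator_apply, Derivation.zero_apply, sub_eq_zero] at hf

/-- The third polar form of `f`, extended to a `k`-algebra `R`: the `R`-trilinear form whose value
at basis vectors `eᵢ, eⱼ, eₗ` is the constant term of `∂ₗ∂ⱼ∂ᵢ f`. For a cubic form `f` it satisfies
`polarForm R f x x x = 6 f(x)`. -/
noncomputable def polarForm {ι k : Type*} [Fintype ι] [CommRing k] (R : Type*) [CommRing R]
    [Algebra k R] (f : MvPolynomial ι k) :
    (ι → R) →ₗ[R] (ι → R) →ₗ[R] (ι → R) →ₗ[R] R :=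
  ∑ i, ∑ j, ∑ l, (LinearMap.proj i : (ι → R) →ₗ[R] R).smulRight
    ((LinearMap.proj j : (ι → R) →ₗ[R] R).smulRight
      (algebraMap k R (coeff 0 (pderiv l (pderiv j (pderiv i f)))) •
        (LinearMap.proj l : (ι → R) →ₗ[R] R)))

variable {ι k R S : Type*} [Fintype ι] [CommRing k] [CommRing R] [Algebra k R] [CommRing S]
  [Algebra k S] (f : MvPolynomial ι k)

lemma polarForm_apply (x y z : ι → R) :
    polarForm R f x y z = ∑ i, ∑ j, ∑ l,
      algebraMap k R (coeff 0 (pderiv l (pderiv j (pderiv i f)))) * x i * y j * z l := by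
  simp only [polarForm, LinearMap.sum_apply, LinearMap.smulRight_apply, LinearMap.smul_apply,
    LinearMap.proj_apply, smul_eq_mul]
  refine Finset.sum_congr rfl fun i _ ↦ Finset.sum_congr rfl fun j _ ↦
    Finset.sum_congr rfl fun l _ ↦ by ring

lemma map_polarForm (φ : R →ₐ[k] S) (x y z : ι → R) :
    φ (polarForm R f x y z) = polarForm S f (φ ∘ x) (φ ∘ y) (φ ∘ z) := by
  simp [polarForm_apply]

lemma derivation_polarForm (D : Derivation k R R) (x y z : ι → R) :
    D (polarForm R f x y z) =
      polarForm R f (D ∘ x) y z + polarForm R f x (D ∘ y) z + polarForm R f x y (D ∘ z) := by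
  simp only [polarForm_apply, map_sum, ← Finset.sum_add_distrib, Derivation.leibniz,
    Derivation.map_algebraMap, smul_eq_mul, Function.comp_apply]
  refine Finset.sum_congr rfl fun i _ ↦ Finset.sum_congr rfl fun j _ ↦
    Finset.sum_congr rfl fun l _ ↦ by ring

lemma polarForm_swap₁₂ (x y z : ι → R) : polarForm R f x y z = polarForm R f y x z := by
  rw [polarForm_apply, polarForm_apply, Finset.sum_comm]
  refine Finset.sum_congr rfl fun j _ ↦ Finset.sum_congr rfl fun i _ ↦
    Finset.sum_congr rfl fun l _ ↦ ?_
  rw [pderiv_comm i j]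
  ring

lemma polarForm_swap₂₃ (x y z : ι → R) : polarForm R f x y z = polarForm R f x z y := by
  rw [polarForm_apply, polarForm_apply]
  refine Finset.sum_congr rfl fun i _ ↦ Finset.sum_comm.trans <|
    Finset.sum_congr rfl fun l _ ↦ Finset.sum_congr rfl fun j _ ↦ ?_
  rw [pderiv_comm l j]
  ring

lemma isHomogeneous_polarForm {σ : Type*} {a b c : ℕ} {x y z : ι → MvPolynomial σ k}
    (hx : ∀ i, (x i).IsHomogeneous a) (hy : ∀ i, (y i).IsHomogeneous b)
    (hz : ∀ i, (z i).IsHomogeneous c) :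
    (polarForm (MvPolynomial σ k) f x y z).IsHomogeneous (a + b + c) := by
  rw [polarForm_apply]
  refine IsHomogeneous.sum _ _ _ fun i _ ↦ IsHomogeneous.sum _ _ _ fun j _ ↦
    IsHomogeneous.sum _ _ _ fun l _ ↦ ?_
  simpa using (((isHomogeneous_C σ _).mul (hx i)).mul (hy j)).mul (hz l)

variable {f}

-- Euler's identity, applied three times.
lemma polarForm_self (hf : f.IsHomogeneous 3) (x : ι → R) :
    polarForm R f x x x = 6 * aeval x f := by
  have hconst (i j l : ι) : C (coeff 0 (pderiv l (pderiv j (pderiv i f)))) =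
      pderiv l (pderiv j (pderiv i f)) :=
    (totalDegree_eq_zero_iff_eq_C.1 <| Nat.le_zero.1
      ((hf.pderiv (i := i)).pderiv (i := j)).pderiv.totalDegree_le).symm
  have heuler : polarForm (MvPolynomial ι k) f X X X = 6 * f :=
    calc polarForm (MvPolynomial ι k) f X X X
        = ∑ i, X i * ∑ j, X j * ∑ l, X l * pderiv l (pderiv j (pderiv i f)) := by
          simp only [polarForm_apply, algebraMap_eq, hconst, Finset.mul_sum]
          refine Finset.sum_congr rfl fun i _ ↦ Finset.sum_congr rfl fun j _ ↦
            Finset.sum_congr rfl fun l _ ↦ by ring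
      _ = ∑ i, X i * ∑ j, X j * pderiv j (pderiv i f) := by
          refine Finset.sum_congr rfl fun i _ ↦ congrArg _ <| Finset.sum_congr rfl fun j _ ↦ ?_
          rw [(hf.pderiv (i := i)).pderiv.sum_X_mul_pderiv, Nat.add_one_sub_one, one_smul]
      _ = 2 • ∑ i, X i * pderiv i f := by
          rw [Finset.smul_sum]
          refine Finset.sum_congr rfl fun i _ ↦ ?_
          rw [hf.pderiv.sum_X_mul_pderiv, mul_smul_comm]
      _ = 6 * f := by
          rw [hf.sum_X_mul_pderiv, ← mul_smul, nsmul_eq_mul]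
          norm_num
  have hmap := map_polarForm f (aeval x : MvPolynomial ι k →ₐ[k] R) X X X
  have hX : aeval (R := k) x ∘ X = x := funext (aeval_X x)
  rwa [heuler, map_mul, map_ofNat, hX, eq_comm] at hmap

lemma eval_eq_inv_six_mul_polarForm {ι k : Type*} [Fintype ι] [Field k] {f : MvPolynomial ι k}
    (h2 : (2 : k) ≠ 0) (h3 : (3 : k) ≠ 0) (hf : f.IsHomogeneous 3) (x : ι → k) :
    eval x f = 6⁻¹ * polarForm k f x x x := by
  rw [polarForm_self hf, aeval_eq_eval,
    inv_mul_cancel_left₀ (six_ne_zero_of_two_ne_zero_of_three_ne_zero h2 h3)]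

end PolarForm

section Specialization

variable {m n : Type*} [Finite m]

section RightInverse

variable [DecidableEq m] [Fintype n]

lemma exists_mul_eq_one_of_linearIndependent_row {K : Type*} [Field K] {M : Matrix m n K}
    (hM : LinearIndependent K M.row) : ∃ B : Matrix n m K, M * B = 1 := by
  cases nonempty_fintype m
  have hrange : LinearMap.range M.mulVecLin = ⊤ :=
    Submodule.eq_top_of_finrank_eq (by simpa [Matrix.rank] using hM.rank_matrix)
  exact Matrix.mulVec_surjective_iff_exists_right_inverse.1 (LinearMap.range_eq_top.1 hrange)

variable {R : Type*} [CommRing R] [IsDomain R] {M : Matrix m n R}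

lemma exists_mul_eq_smul_one_of_linearIndependent_row (hM : LinearIndependent R M.row) :
    ∃ B : Matrix n m R, ∃ δ : R, δ ≠ 0 ∧ M * B = δ • 1 := by
  let φ : R →+* FractionRing R := algebraMap R (FractionRing R)
  have hφ : Function.Injective φ := IsFractionRing.injective R (FractionRing R)
  have hMK : LinearIndependent (FractionRing R) (M.map φ).row := by
    rw [← LinearIndependent.iff_fractionRing R (FractionRing R)]
    exact hM.map_injOn ((Algebra.linearMap R (FractionRing R)).compLeft n) hφ.comp_left.injOn
  obtain ⟨B, hB⟩ := exists_mul_eq_one_of_linearIndependent_row hMK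
  obtain ⟨δ, hδ⟩ := IsLocalization.exist_integer_multiples_of_finite (nonZeroDivisors R)
    fun p : n × m ↦ B p.1 p.2
  obtain ⟨B', hB'⟩ : ∃ B' : Matrix n m R, B'.map φ = φ δ • B := by
    choose b hb using hδ
    refine ⟨.of fun j i ↦ b (j, i), ?_⟩
    ext j i
    exact (hb (j, i)).trans (Algebra.smul_def _ _)
  refine ⟨B', δ, nonZeroDivisors.coe_ne_zero δ, Matrix.map_injective hφ ?_⟩
  change (M * B').map φ = ((δ : R) • (1 : Matrix m m R)).map φ
  rw [Matrix.map_mul, hB', Matrix.mul_smul, hB, Matrix.map_smul' _ _ _ (map_mul φ),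
    Matrix.map_one _ (map_zero φ) (map_one φ)]

lemma linearIndependent_row_of_mul_eq_smul_one {B : Matrix n m R} {δ : R} (hδ : δ ≠ 0)
    (h : M * B = δ • 1) : LinearIndependent R M.row := by
  cases nonempty_fintype m
  rw [← Matrix.vecMul_injective_iff]
  intro v w hvw
  have hvw' : Matrix.vecMul v (M * B) = Matrix.vecMul w (M * B) := by
    simpa only [Matrix.vecMul_vecMul] using congrArg (Matrix.vecMul · B) hvw
  simpa only [h, Matrix.vecMul_smul, Matrix.vecMul_one, smul_right_inj hδ] using hvw'

end RightInverse

variable {k σ : Type*} [Field k] [Infinite k] [Finite n]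

lemma exists_linearIndependent_row_map_eval {M : Matrix m n (MvPolynomial σ k)}
    (hM : LinearIndependent (MvPolynomial σ k) M.row) :
    ∃ p : σ → k, LinearIndependent k (M.map (eval p)).row := by
  classical
  cases nonempty_fintype n
  obtain ⟨B, δ, hδ, h⟩ := exists_mul_eq_smul_one_of_linearIndependent_row hM
  obtain ⟨p, hp⟩ : ∃ p, eval p δ ≠ 0 := by
    contrapose! hδ
    exact MvPolynomial.funext fun p ↦ by rw [hδ, map_zero]
  refine ⟨p, linearIndependent_row_of_mul_eq_smul_one (B := B.map (eval p)) hp ?_⟩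
  rw [← Matrix.map_mul, h, Matrix.map_smul' _ _ _ (map_mul (eval p)),
    Matrix.map_one _ (map_zero (eval p)) (map_one (eval p))]

lemma exists_submodule_finrank_eq_of_aeval_eq_zero {f : MvPolynomial n k}
    {L : Submodule (MvPolynomial σ k) (n → MvPolynomial σ k)} (hL : ∀ v ∈ L, aeval v f = 0) :
    ∃ L' : Submodule k (n → k), finrank k L' = finrank (MvPolynomial σ k) L ∧
      ∀ v ∈ L', eval v f = 0 := by
  obtain ⟨b, hb⟩ := exists_linearIndependent_of_le_finrank le_rfl (R := MvPolynomial σ k) (M := L)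
  let M : Matrix _ n (MvPolynomial σ k) := .of fun i ↦ (b i).1
  obtain ⟨p, hp⟩ := exists_linearIndependent_row_map_eval (M := M)
    (hb.map' L.subtype L.ker_subtype)
  refine ⟨Submodule.span k (Set.range (M.map (eval p)).row), ?_, fun x hx ↦ ?_⟩
  · rw [finrank_span_eq_card hp, Fintype.card_fin]
  · obtain ⟨c, rfl⟩ := (Submodule.mem_span_range_iff_exists_fun k).1 hx
    let v : n → MvPolynomial σ k := ∑ i, (C (c i) : MvPolynomial σ k) • (b i).1
    have hv : v ∈ L := L.sum_mem fun i _ ↦ L.smul_mem _ (b i).2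
    have hspec : ∑ i, c i • (M.map (eval p)).row i = aeval (R := k) p ∘ v := by
      ext j
      simp [M, v, Finset.sum_apply]
    rw [hspec, ← coe_aeval_eq_eval]
    exact (comp_aeval_apply _ _ f).symm.trans (by rw [hL v hv, map_zero])

end Specialization

section QRank

variable {k : Type*} [Field k]

lemma exists_coordinates_mod_submodule {V : Type*} [AddCommGroup V] [Module k V]
    [FiniteDimensional k V] (L : Submodule k V) :
    ∃ (Φ : V →ₗ[k] Fin (finrank k (V ⧸ L)) → k) (e : Fin (finrank k (V ⧸ L)) → V),
      ∀ v, v - ∑ i, Φ v i • e i ∈ L := by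
  let b := finBasis k (V ⧸ L)
  choose e he using fun i ↦ L.mkQ_surjective (b i)
  refine ⟨b.equivFun.toLinearMap ∘ₗ L.mkQ, e, fun v ↦ ?_⟩
  rw [← Submodule.Quotient.mk_eq_zero, ← L.mkQ_apply, map_sub, map_sum, sub_eq_zero]
  simpa only [map_smul, he, LinearMap.comp_apply, LinearEquiv.coe_coe] using
    (b.sum_equivFun (L.mkQ v)).symm

lemma aeval_eq_zero_of_forall_eval_mem [Infinite k] {σ τ : Type*} {f : MvPolynomial σ k}
    {p : σ → MvPolynomial τ k} {L : Set (σ → k)} (hL : ∀ v ∈ L, eval v f = 0)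
    (hp : ∀ v, (fun j ↦ eval v (p j)) ∈ L) : aeval p f = 0 := by
  refine MvPolynomial.funext fun v ↦ ?_
  have hspec : eval v (aeval p f) = eval (fun j ↦ eval v (p j)) f :=
    comp_aeval_apply p (aeval (R := k) v) f
  rw [hspec, hL _ (hp v), map_zero]

lemma six_mul_eq_sum_of_aeval_sub_eq_zero {ι κ k : Type*} [Fintype ι] [Fintype κ] [CommRing k]
    {f : MvPolynomial ι k} (hf : f.IsHomogeneous 3) {ℓ : κ → MvPolynomial ι k}
    {e : κ → ι → MvPolynomial ι k} {p : ι → MvPolynomial ι k} (hp : p = X - ∑ i, ℓ i • e i)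
    (hfp : aeval p f = 0) :
    6 * f = ∑ i, ℓ i * (polarForm _ f (e i) X X + polarForm _ f p (e i) X +
      polarForm _ f p p (e i)) := by
  let F := polarForm (MvPolynomial ι k) f
  let s := ∑ i, ℓ i • e i
  have hp₃ : F p p p = 0 := by rw [polarForm_self hf, hfp, mul_zero]
  calc 6 * f = F X X X := by rw [polarForm_self hf, aeval_X_left_apply]
    _ = F s X X + F p s X + F p p s + F p p p := by
      simp only [show s = X - p from hp ▸ (sub_sub_cancel X s).symm, map_sub, LinearMap.sub_apply]
      ring
    _ = ∑ i, ℓ i * (F (e i) X X + F p (e i) X + F p p (e i)) := by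
      simp only [hp₃, s, map_sum, LinearMap.sum_apply, map_smul, LinearMap.smul_apply, smul_eq_mul,
        mul_add, Finset.sum_add_distrib, add_zero]

variable {n : ℕ} {f : MvPolynomial (Fin n) k}

lemma polyQRank_le_finrank_quotient [Infinite k] (h2 : (2 : k) ≠ 0) (h3 : (3 : k) ≠ 0)
    (hf : f.IsHomogeneous 3) {L : Submodule k (Fin n → k)} (hL : ∀ v ∈ L, eval v f = 0) :
    polyQRank f ≤ finrank k ((Fin n → k) ⧸ L) := by
  obtain ⟨Φ, e, hΦe⟩ := exists_coordinates_mod_submodule L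
  let R := MvPolynomial (Fin n) k
  let F := polarForm R f
  let ℓ (i) : R := (LinearMap.toMatrix' Φ).toMvPolynomial i
  let E (i) (j : Fin n) : R := C (e i j)
  let p : Fin n → R := X - ∑ i, ℓ i • E i
  have hℓ (i) : (ℓ i).IsHomogeneous 1 := Matrix.toMvPolynomial_isHomogeneous _ i
  have hE (i) (j : Fin n) : (E i j).IsHomogeneous 0 := isHomogeneous_C _ _
  have hX (j : Fin n) : (X j : R).IsHomogeneous 1 := isHomogeneous_X k j
  have hp (j : Fin n) : (p j).IsHomogeneous 1 := by
    simp only [p, Pi.sub_apply, Finset.sum_apply, Pi.smul_apply, smul_eq_mul]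
    exact (hX j).sub (.sum _ _ _ fun i _ ↦ (hℓ i).mul (hE i j))
  let q (i) : R := F (E i) X X + F p (E i) X + F p p (E i)
  have hq (i) : (q i).IsHomogeneous 2 := by
    refine IsHomogeneous.add (IsHomogeneous.add ?_ ?_) ?_
    · exact isHomogeneous_polarForm f (hE i) hX hX
    · exact isHomogeneous_polarForm f hp (hE i) hX
    · exact isHomogeneous_polarForm f hp hp (hE i)
  have hpL (v : Fin n → k) : (fun j ↦ eval v (p j)) ∈ L := by
    convert hΦe v using 1
    ext j
    simp [p, ℓ, E, Matrix.toMvPolynomial_eval_eq_apply]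
  have hfp : aeval p f = 0 := aeval_eq_zero_of_forall_eval_mem hL hpL
  have h6f : 6 * f = ∑ i, ℓ i * q i := six_mul_eq_sum_of_aeval_sub_eq_zero hf rfl hfp
  have h6 : (6 : k) ≠ 0 := six_ne_zero_of_two_ne_zero_of_three_ne_zero h2 h3
  refine sInf_le ⟨_, rfl, ℓ, fun i ↦ C 6⁻¹ * q i, hℓ, fun i ↦ (hq i).C_mul _, ?_⟩
  simp only [mul_left_comm _ (C _), ← Finset.mul_sum, ← h6f]
  rw [← mul_assoc, ← map_ofNat C, ← C_mul, inv_mul_cancel₀ h6, C_1, one_mul]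

end QRank

section PairForms

lemma sum_sum_smul_sym2Mk {ι M : Type*} [Fintype ι] [DecidableEq ι] [AddCommMonoid M]
    (G : Sym2 ι → M) :
    ∑ a, ∑ b, (if a = b then 2 else 1) • G s(a, b) = 2 • ∑ p, G p := by
  rw [← Fintype.sum_prod_type' (f := fun a b ↦ (if a = b then 2 else 1) • G s(a, b)),
    ← Finset.sum_fiberwise Finset.univ (fun q : ι × ι ↦ s(q.1, q.2)), Finset.smul_sum]
  refine Finset.sum_congr rfl fun p _ ↦ ?_
  induction p with | _ a b
  have hfiber : ({q | s(q.1, q.2) = s(a, b)} : Finset (ι × ι)) = {(a, b), (b, a)} := by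
    ext ⟨x, y⟩
    simp
  rw [hfiber]
  rcases eq_or_ne a b with rfl | hab
  · simp
  · rw [Finset.sum_pair (by simp [hab]), if_neg hab, if_neg hab.symm, Sym2.eq_swap (a := b),
      two_smul, one_smul]

lemma exists_symmetric_relation_of_not_linearIndependent {ι R M : Type*} [Fintype ι] [CommRing R]
    [IsDomain R] [AddCommGroup M] [Module R M] (h2 : (2 : R) ≠ 0) {g : Sym2 ι → M}
    (hg : ¬LinearIndependent R g) :
    ∃ c : Sym2 ι → R, c ≠ 0 ∧ ∑ a, ∑ b, c s(a, b) • g s(a, b) = 0 := by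
  classical
  obtain ⟨c, hc, p, hp⟩ := Fintype.not_linearIndependent_iff.1 hg
  refine ⟨fun p ↦ (if p.IsDiag then 2 else 1) * c p, fun h ↦ ?_, ?_⟩
  · have hp' := congrFun h p
    simp only [Pi.zero_apply, mul_eq_zero, hp, or_false] at hp'
    split_ifs at hp'
    · exact h2 hp'
    · exact one_ne_zero hp'
  · have hsum := sum_sum_smul_sym2Mk fun p ↦ c p • g p
    rw [hc, smul_zero] at hsum
    rw [← hsum]
    refine Finset.sum_congr rfl fun a _ ↦ Finset.sum_congr rfl fun b _ ↦ ?_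
    simp only [Sym2.mk_isDiag_iff, mul_smul]
    split_ifs <;> simp [two_smul]

variable {ι σ k : Type*} [Field k]

section Algebra

variable [Fintype σ] {R : Type*} [CommRing R] [Algebra k R] (f : MvPolynomial σ k) (w : ι → σ → R)

/-- The linear forms `polarForm R f (w a) (w b)` attached to a family of vectors `w`, indexed by the
unordered pairs `s(a, b)`. -/
noncomputable def pairForm : Sym2 ι → (σ → R) →ₗ[R] R :=
  Sym2.lift ⟨fun a b ↦ polarForm R f (w a) (w b),
    fun _ _ ↦ LinearMap.ext (polarForm_swap₁₂ f _ _)⟩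

@[simp]
lemma pairForm_mk (a b : ι) : pairForm f w s(a, b) = polarForm R f (w a) (w b) := rfl

/-- The common kernel of the linear forms `pairForm f w p`. -/
noncomputable def pairKernel : Submodule R (σ → R) := ⨅ p, LinearMap.ker (pairForm f w p)

variable {f w} in
lemma polarForm_eq_zero_of_mem_pairKernel {κ : σ → R} (hκ : κ ∈ pairKernel f w) (a b : ι) :
    polarForm R f (w a) (w b) κ = 0 :=
  (Submodule.mem_iInf _).1 hκ s(a, b)

/-- The vectors `x` for which the bilinear form `polarForm R f x` vanishes on `K`. -/
def polarAnnihilator (K : Submodule R (σ → R)) : Submodule R (σ → R) where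
  carrier := {x | ∀ y ∈ K, ∀ z ∈ K, polarForm R f x y z = 0}
  zero_mem' := by simp
  add_mem' hx hx' y hy z hz := by simp [hx y hy z hz, hx' y hy z hz]
  smul_mem' c x hx y hy z hz := by simp [hx y hy z hz]

variable {f} in
lemma derivation_comp_mem_polarAnnihilator {K : Submodule R (σ → R)} {u : σ → R}
    (hu : ∀ v, ∀ z ∈ K, polarForm R f u v z = 0) (D : Derivation k R R) :
    D ∘ u ∈ polarAnnihilator f K := by
  intro y hy z hz
  have h := derivation_polarForm f D u y z
  rwa [hu y z hz, hu _ z hz, polarForm_swap₂₃ f u y, hu _ y hy, map_zero, add_zero, add_zero,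
    eq_comm] at h

variable [Fintype ι] (c : Sym2 ι → R)

/-- For a relation `∑ a, ∑ b, c s(a, b) • pairForm f w s(a, b) = 0`, the left slot paired with
`w b`. -/
def relationVector (b : ι) : σ → R := ∑ a, c s(b, a) • w a

variable {f w c}

lemma sum_polarForm_relationVector (v : ι → σ → R) (z : σ → R) :
    ∑ b, polarForm R f (relationVector w c b) (v b) z =
      ∑ b, ∑ a, c s(b, a) * polarForm R f (w a) (v b) z := by
  simp [relationVector, LinearMap.sum_apply]

lemma sum_polarForm_relationVector_derivation_eq_zero [IsDomain R] (h2 : (2 : R) ≠ 0)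
    (hc : ∑ a, ∑ b, c s(a, b) • pairForm f w s(a, b) = 0) {κ : σ → R} (hκ : κ ∈ pairKernel f w)
    (D : Derivation k R R) :
    ∑ b, polarForm R f (relationVector w c b) (D ∘ w b) κ = 0 := by
  let F := polarForm R f
  have hrel (z : σ → R) : ∑ a, ∑ b, c s(a, b) * F (w a) (w b) z = 0 := by
    simpa [LinearMap.sum_apply] using LinearMap.congr_fun hc z
  have hderiv : ∑ a, ∑ b, c s(a, b) * (F (D ∘ w a) (w b) κ + F (w a) (D ∘ w b) κ) = 0 := by
    have h := congrArg D (hrel κ)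
    simp only [F, map_sum, map_zero, Derivation.leibniz, derivation_polarForm] at h
    simpa only [F, polarForm_eq_zero_of_mem_pairKernel hκ, smul_eq_mul, zero_mul, mul_add,
      Finset.sum_add_distrib, hrel, add_zero] using h
  refine (mul_eq_zero.1 ?_).resolve_left h2
  rw [sum_polarForm_relationVector, two_mul, ← hderiv]
  simp only [mul_add, Finset.sum_add_distrib]
  congr 1
  · simp only [F, polarForm_swap₁₂ f (D ∘ w _)]
  · rw [Finset.sum_comm]
    simp only [F, Sym2.eq_swap]

end Algebra

end PairForms

section Generic

variable {ι σ k : Type*} [Field k]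

/-- The family of vectors whose coordinates are independent indeterminates. -/
noncomputable def genericVector (k : Type*) [CommSemiring k] {ι σ : Type*} (a : ι) (i : σ) :
    MvPolynomial (ι × σ) k :=
  X (a, i)

lemma linearIndependent_row_toMatrix'_pi_iff {m R : Type*} [CommRing R] [Fintype σ] [DecidableEq σ]
    {φ : m → (σ → R) →ₗ[R] R} :
    LinearIndependent R (LinearMap.toMatrix' (LinearMap.pi φ)).row ↔ LinearIndependent R φ := by
  rw [← (piEquiv σ R R).toLinearMap.linearIndependent_iff (piEquiv σ R R).ker]
  congr! 1
  ext p j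
  simp [piEquiv_apply_apply, LinearMap.toMatrix'_apply, Pi.single_apply]

lemma exists_linearIndependent_pairForm_of_generic [Fintype σ] [Finite ι] [Infinite k]
    {f : MvPolynomial σ k}
    (h : LinearIndependent (MvPolynomial (ι × σ) k) (pairForm f (genericVector k (ι := ι)))) :
    ∃ w : ι → σ → k, LinearIndependent k (pairForm f w) := by
  classical
  obtain ⟨x, hx⟩ := exists_linearIndependent_row_map_eval
    (linearIndependent_row_toMatrix'_pi_iff.2 h)
  let ev : MvPolynomial (ι × σ) k →ₐ[k] k := aeval x
  refine ⟨fun a i ↦ x (a, i), linearIndependent_row_toMatrix'_pi_iff.1 ?_⟩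
  suffices hM : LinearMap.toMatrix' (LinearMap.pi (pairForm f fun a i ↦ x (a, i))) =
      (LinearMap.toMatrix' (LinearMap.pi (pairForm f (genericVector k)))).map (eval x) by
    rwa [hM]
  ext p j
  induction p with | _ a b
  have hw (a : ι) : ev ∘ genericVector k a = fun i ↦ x (a, i) := by
    ext i
    simp [ev, genericVector]
  have hj : ev ∘ Pi.single j 1 = Pi.single j 1 := by
    ext i
    simp [Pi.single_apply, apply_ite]
  have hmap := map_polarForm f ev (genericVector k a) (genericVector k b) (Pi.single j 1)
  rw [hw, hw, hj] at hmap
  simpa [ev, LinearMap.toMatrix'_apply, aeval_eq_eval] using hmap.symm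

lemma mkDerivation_uncurry_comp_genericVector (v : ι → σ → MvPolynomial (ι × σ) k) (a : ι) :
    mkDerivation k (Function.uncurry v) ∘ genericVector k a = v a :=
  funext fun i ↦ mkDerivation_X k _ (a, i)

variable [Fintype ι] {c : Sym2 ι → MvPolynomial (ι × σ) k}

lemma derivation_comp_relationVector_genericVector [DecidableEq ι] (a b : ι)
    (v : σ → MvPolynomial (ι × σ) k) :
    mkDerivation k (Function.uncurry (Pi.single b v)) ∘ relationVector (genericVector k) c a =
      (∑ a', mkDerivation k (Function.uncurry (Pi.single b v)) (c s(a, a')) • genericVector k a') +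
        c s(a, b) • v := by
  let D := mkDerivation k (Function.uncurry (Pi.single b v))
  have hD (a' : ι) (i : σ) : D (genericVector k a' i) = (Pi.single b v : ι → σ → _) a' i :=
    congrFun (mkDerivation_uncurry_comp_genericVector _ a') i
  ext1 i
  simp only [Function.comp_apply, relationVector, Finset.sum_apply, Pi.smul_apply, Pi.add_apply,
    map_sum, smul_eq_mul, Derivation.leibniz, Finset.sum_add_distrib]
  rw [add_comm]
  congr 1
  · exact Finset.sum_congr rfl fun a' _ ↦ mul_comm _ _
  · rw [Fintype.sum_eq_single b fun a' ha' ↦ by simp [hD, D, Pi.single_eq_of_ne ha'], hD,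
      Pi.single_eq_same]

variable [Fintype σ] {f : MvPolynomial σ k}

lemma polarForm_relationVector_genericVector_eq_zero (h2 : (2 : k) ≠ 0)
    (hc : ∑ a, ∑ b, c s(a, b) • pairForm f (genericVector k) s(a, b) = 0) (b : ι)
    (v : σ → MvPolynomial (ι × σ) k) {κ : σ → MvPolynomial (ι × σ) k}
    (hκ : κ ∈ pairKernel f (genericVector k (ι := ι))) :
    polarForm _ f (relationVector (genericVector k) c b) v κ = 0 := by
  classical
  have h2' : (2 : MvPolynomial (ι × σ) k) ≠ 0 := by
    rw [← map_ofNat C]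
    exact C_ne_zero.2 h2
  have h := sum_polarForm_relationVector_derivation_eq_zero h2' hc hκ
    (mkDerivation k (Function.uncurry (Pi.single b v)))
  simp only [mkDerivation_uncurry_comp_genericVector] at h
  rwa [Fintype.sum_eq_single b fun a ha ↦ by rw [Pi.single_eq_of_ne ha, map_zero,
    LinearMap.zero_apply], Pi.single_eq_same] at h

lemma finrank_span_range_ne_lt_card {R M : Type*} [CommRing R] [Nontrivial R] [AddCommGroup M]
    [Module R M] (w : ι → M) (b : ι) :
    finrank R (Submodule.span R (Set.range fun a : {a // a ≠ b} ↦ w a)) < Fintype.card ι := by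
  classical
  have hle := finrank_range_le_card (R := R) fun a : {a // a ≠ b} ↦ w a
  exact hle.trans_lt (Fintype.card_subtype_lt (x := b) (by simp))

lemma sq_smul_mem_polarAnnihilator_sup_span (h2 : (2 : k) ≠ 0)
    (hc : ∑ a, ∑ b, c s(a, b) • pairForm f (genericVector k) s(a, b) = 0) (a b : ι)
    (v : σ → MvPolynomial (ι × σ) k) :
    c s(a, b) ^ 2 • v ∈ polarAnnihilator f (pairKernel f (genericVector k (ι := ι))) ⊔
      Submodule.span _ (Set.range fun a' : {a' // a' ≠ b} ↦ genericVector k (a' : ι)) := by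
  classical
  let R := MvPolynomial (ι × σ) k
  let w : ι → σ → R := genericVector k
  let T := polarAnnihilator f (pairKernel f w)
  let S := Submodule.span R (Set.range fun a' : {a' // a' ≠ b} ↦ w a')
  change _ ∈ T ⊔ S
  have hu (x) (κ) (hκ : κ ∈ pairKernel f w) : polarForm R f (relationVector w c a) x κ = 0 :=
    polarForm_relationVector_genericVector_eq_zero h2 hc a x hκ
  have hwS (a') (ha' : a' ≠ b) : w a' ∈ T ⊔ S :=
    Submodule.mem_sup_right (Submodule.subset_span ⟨⟨a', ha'⟩, rfl⟩)
  have hwb : c s(a, b) • w b ∈ T ⊔ S := by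
    have huT : relationVector w c a ∈ T ⊔ S :=
      Submodule.mem_sup_left fun y _ z hz ↦ hu y z hz
    rw [relationVector, ← Finset.add_sum_erase _ _ (Finset.mem_univ b)] at huT
    refine (Submodule.add_mem_iff_left _ (Submodule.sum_mem _ fun a' ha' ↦ ?_)).1 huT
    exact Submodule.smul_mem _ _ (hwS a' (Finset.ne_of_mem_erase ha'))
  have hw (a') : c s(a, b) • w a' ∈ T ⊔ S := by
    rcases eq_or_ne a' b with rfl | ha'
    · exact hwb
    · exact Submodule.smul_mem _ _ (hwS a' ha')
  have hDu := Submodule.smul_mem (T ⊔ S) (c s(a, b)) <| Submodule.mem_sup_left <|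
    derivation_comp_mem_polarAnnihilator hu (mkDerivation k (Function.uncurry (Pi.single b v)))
  rw [derivation_comp_relationVector_genericVector, smul_add, Finset.smul_sum, smul_smul,
    ← sq] at hDu
  refine (Submodule.add_mem_iff_right _ (Submodule.sum_mem _ fun a' _ ↦ ?_)).1 hDu
  rw [smul_comm]
  exact Submodule.smul_mem _ _ (hw a')

lemma card_lt_finrank_polarAnnihilator_add_card (h2 : (2 : k) ≠ 0) (hc0 : c ≠ 0)
    (hc : ∑ a, ∑ b, c s(a, b) • pairForm f (genericVector k) s(a, b) = 0) :
    Fintype.card σ < finrank (MvPolynomial (ι × σ) k)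
      (polarAnnihilator f (pairKernel f (genericVector k (ι := ι)))) + Fintype.card ι := by
  obtain ⟨p, hp⟩ := Function.ne_iff.1 hc0
  induction p with | _ a b
  have hrank := finrank_le_finrank_add_of_smul_mem_sup (pow_ne_zero 2 hp)
    (sq_smul_mem_polarAnnihilator_sup_span h2 hc a b)
  rw [finrank_fintype_fun_eq_card] at hrank
  exact hrank.trans_lt (Nat.add_lt_add_left (finrank_span_range_ne_lt_card _ b) _)

lemma exists_submodule_eval_eq_zero_of_not_linearIndependent_pairForm [Infinite k]
    (h2 : (2 : k) ≠ 0) (h3 : (3 : k) ≠ 0) (hf : f.IsHomogeneous 3)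
    (h : ∀ w : ι → σ → k, ¬LinearIndependent k (pairForm f w)) :
    ∃ L : Submodule k (σ → k), (∀ v ∈ L, eval v f = 0) ∧
      Fintype.card σ + 2 ≤ finrank k L + Fintype.card (Sym2 ι) + Fintype.card ι := by
  let R := MvPolynomial (ι × σ) k
  let K := pairKernel f (genericVector k (ι := ι))
  let L := K ⊓ polarAnnihilator f K
  have hne {a : k} (ha : a ≠ 0) : (C a : R) ≠ 0 := C_ne_zero.2 ha
  have h6 : (6 : R) ≠ 0 := six_ne_zero_of_two_ne_zero_of_three_ne_zero (hne h2) (hne h3)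
  have hdep : ¬LinearIndependent R (pairForm f (genericVector k (ι := ι))) := fun hli ↦
    (exists_linearIndependent_pairForm_of_generic hli).elim h
  obtain ⟨c, hc0, hc⟩ := exists_symmetric_relation_of_not_linearIndependent (hne h2) hdep
  have hL (v) (hv : v ∈ L) : aeval v f = 0 := by
    refine (mul_eq_zero.1 ?_).resolve_left h6
    rw [← polarForm_self hf]
    exact hv.2 v hv.1 v hv.1
  obtain ⟨L', (hL'rank : finrank k L' = finrank R L), hL'⟩ :=
    exists_submodule_finrank_eq_of_aeval_eq_zero hL
  refine ⟨L', hL', ?_⟩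
  have hK : Fintype.card σ < finrank R K + Fintype.card (Sym2 ι) := by
    rw [← finrank_fintype_fun_eq_card R]
    exact finrank_lt_finrank_ker_add_card_of_not_linearIndependent hdep
  have hT : Fintype.card σ < finrank R (polarAnnihilator f K) + Fintype.card ι :=
    card_lt_finrank_polarAnnihilator_add_card h2 hc0 hc
  have hKT : finrank R K + finrank R (polarAnnihilator f K) ≤ finrank R L + Fintype.card σ := by
    rw [← finrank_fintype_fun_eq_card R]
    exact finrank_add_finrank_le_finrank_inf_add K (polarAnnihilator f K)
  lia

end Generic

section QRankBound

variable {k : Type*} [Field k] [Infinite k] {n : ℕ} {f : MvPolynomial (Fin n) k}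

lemma polyQRank_add_two_le_of_not_linearIndependent_pairForm {ι : Type*} [Fintype ι]
    (h2 : (2 : k) ≠ 0) (h3 : (3 : k) ≠ 0) (hf : f.IsHomogeneous 3)
    (h : ∀ w : ι → Fin n → k, ¬LinearIndependent k (pairForm f w)) :
    polyQRank f + 2 ≤ (Fintype.card (Sym2 ι) + Fintype.card ι : ℕ) := by
  obtain ⟨L, hL, hrank⟩ :=
    exists_submodule_eval_eq_zero_of_not_linearIndependent_pairForm h2 h3 hf h
  have hcodim := L.finrank_quotient_add_finrank
  rw [finrank_fin_fun] at hcodim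
  rw [Fintype.card_fin] at hrank
  calc polyQRank f + 2 ≤ finrank k ((Fin n → k) ⧸ L) + 2 := by
        gcongr
        exact polyQRank_le_finrank_quotient h2 h3 hf hL
    _ ≤ (Fintype.card (Sym2 ι) + Fintype.card ι : ℕ) := by
        norm_cast
        lia

lemma choose_two_add_le_of_le_xi {N r : ℕ} (hN : N ≤ xi r) : (N + 1).choose 2 + N ≤ r + 1 := by
  have hpos : (0 : ℝ) ≤ (√(8 * r + 17) - 3) / 2 := by
    have h3 : (3 : ℝ) ≤ √(8 * r + 17) :=
      Real.le_sqrt_of_sq_le (by linarith [r.cast_nonneg (α := ℝ)])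
    linarith
  have hsqrt : (2 * N + 3 : ℝ) ≤ √(8 * r + 17) := by
    have h := (Nat.le_floor_iff hpos).1 hN
    linarith
  have hsq : (2 * N + 3 : ℝ) ^ 2 ≤ 8 * r + 17 :=
    (Real.le_sqrt (by positivity) (by positivity)).1 hsqrt
  have hsq' : (2 * N + 3) ^ 2 ≤ 8 * r + 17 := by exact_mod_cast hsq
  have hchoose : (N + 1).choose 2 * 2 = (N + 1) * N := by
    rw [Nat.choose_two_right, Nat.add_sub_cancel]
    exact Nat.div_mul_cancel (mul_comm N _ ▸ N.even_mul_succ_self.two_dvd)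
  nlinarith

lemma exists_linearIndependent_pairForm_of_le_xi (h2 : (2 : k) ≠ 0) (h3 : (3 : k) ≠ 0)
    (hf : f.IsHomogeneous 3) {N r : ℕ} (hr : r ≤ polyQRank f) (hN : N ≤ xi r) :
    ∃ w : Fin N → Fin n → k, LinearIndependent k (pairForm f w) := by
  by_contra! h
  have hle := (add_le_add_left hr 2).trans
    (polyQRank_add_two_le_of_not_linearIndependent_pairForm h2 h3 hf h)
  rw [Sym2.card, Fintype.card_fin] at hle
  have hxi := choose_two_add_le_of_le_xi hN
  norm_cast at hle
  lia

end QRankBound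

section Realization

variable {k : Type*} [Field k]

section

variable {ι σ : Type*}

lemma exists_forall_apply_eq_of_linearIndependent [Finite σ] {m : Type*} [Finite m]
    {φ : m → (σ → k) →ₗ[k] k} (hφ : LinearIndependent k φ) (t : m → k) :
    ∃ v, ∀ i, φ i v = t i := by
  classical
  cases nonempty_fintype m
  cases nonempty_fintype σ
  obtain ⟨B, hB⟩ :=
    exists_mul_eq_one_of_linearIndependent_row (linearIndependent_row_toMatrix'_pi_iff.2 hφ)
  refine ⟨B.mulVec t, fun i ↦ ?_⟩
  have h := LinearMap.toMatrix'_mulVec (LinearMap.pi φ) (B.mulVec t)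
  rw [Matrix.mulVec_mulVec, hB, Matrix.one_mulVec] at h
  exact (congrFun h i).symm

variable [Fintype σ] {f : MvPolynomial σ k} {w : ι → σ → k}

lemma linearIndependent_of_linearIndependent_pairForm (hw : LinearIndependent k (pairForm f w)) :
    LinearIndependent k w := by
  rcases isEmpty_or_nonempty ι with _ | ⟨⟨a⟩⟩
  · exact linearIndependent_empty_type
  · exact .of_comp (polarForm k f (w a)) (hw.comp (s(a, ·)) fun _ _ ↦ Sym2.congr_right.1)

lemma exists_polarForm_eq_bilin_of_linearIndependent_pairForm [Finite ι]
    (hw : LinearIndependent k (pairForm f w)) {B : (σ → k) →ₗ[k] (σ → k) →ₗ[k] k}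
    (hB : ∀ x y, B x y = B y x) :
    ∃ v, ∀ x ∈ Submodule.span k (Set.range w), ∀ y ∈ Submodule.span k (Set.range w),
      polarForm k f x y v = B x y := by
  obtain ⟨v, hv⟩ := exists_forall_apply_eq_of_linearIndependent hw
    (Sym2.lift ⟨fun a b ↦ B (w a) (w b), fun _ _ ↦ hB _ _⟩)
  refine ⟨v, fun x hx y hy ↦ ?_⟩
  induction hx, hy using Submodule.span_induction₂ with
  | mem_mem x y hx hy =>
    obtain ⟨⟨a, rfl⟩, b, rfl⟩ := hx, hy
    exact hv s(a, b)
  | zero_left | zero_right => simp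
  | add_left _ _ _ _ _ _ h₁ h₂ | add_right _ _ _ _ _ _ h₁ h₂ => simp [h₁, h₂]
  | smul_left _ _ _ _ _ h | smul_right _ _ _ _ _ h => simp [h]

end

lemma exists_injective_linearMap_eval_eq_zero [IsAlgClosed k] {σ : Type*} [Finite σ]
    {f : MvPolynomial σ k} (h2 : (2 : k) ≠ 0) (h3 : (3 : k) ≠ 0) (hf : f.IsHomogeneous 3)
    {d : ℕ} {W : Submodule k (σ → k)} (hW : 2 * (2 ^ d - 1) ≤ finrank k W) :
    ∃ θ : (Fin d → k) →ₗ[k] σ → k, Function.Injective θ ∧ (∀ x, θ x ∈ W) ∧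
      ∀ x, eval (θ x) f = 0 := by
  cases nonempty_fintype σ
  obtain ⟨U, hUW, hUd, hU⟩ := exists_isotropic_submodule_of_trilin (F := polarForm k f)
    (polarForm_swap₁₂ f) (polarForm_swap₂₃ f) d W hW
  let e : (Fin d → k) ≃ₗ[k] U := (finBasisOfFinrankEq k U hUd).equivFun.symm
  refine ⟨U.subtype ∘ₗ e.toLinearMap, U.subtype_injective.comp e.injective,
    fun x ↦ hUW (e x).2, fun x ↦ ?_⟩
  have hx : polarForm k f (e x) (e x) (e x) = 0 := hU (e x) (e x).2
  rw [eval_eq_inv_six_mul_polarForm h2 h3 hf]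
  exact mul_eq_zero_of_right _ hx

lemma exists_linearMap_polarForm_eq {ι σ : Type*} [Finite ι] [Fintype σ] {f : MvPolynomial σ k}
    {w : ι → σ → k} (h3 : (3 : k) ≠ 0) (hw : LinearIndependent k (pairForm f w)) {d : ℕ}
    {θ : (Fin d → k) →ₗ[k] σ → k} (hθ : Function.Injective θ)
    (hθw : ∀ x, θ x ∈ Submodule.span k (Set.range w)) {h : MvPolynomial (Fin d) k}
    (hh : h.IsHomogeneous 3) :
    ∃ ψ : (Fin d → k) →ₗ[k] σ → k, ∀ x, polarForm k f (θ x) (θ x) (ψ x) = 2 * eval x h := by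
  obtain ⟨φ, hφ⟩ := θ.exists_leftInverse_of_injective (LinearMap.ker_eq_bot.2 hθ)
  have hφθ (x) : φ (θ x) = x := congr($hφ x)
  let B (c : Fin d) : (σ → k) →ₗ[k] (σ → k) →ₗ[k] k :=
    (3 : k)⁻¹ • (polarForm k h (Pi.single c 1)).compl₁₂ φ φ
  have hB (c x y) : B c x y = B c y x := congrArg ((3 : k)⁻¹ * ·) (polarForm_swap₂₃ h _ _ _)
  choose v hv using fun c ↦ exists_polarForm_eq_bilin_of_linearIndependent_pairForm hw (hB c)
  refine ⟨Fintype.linearCombination k v, fun x ↦ ?_⟩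
  calc polarForm k f (θ x) (θ x) (Fintype.linearCombination k v x)
      = ∑ c, x c * ((3 : k)⁻¹ * polarForm k h (Pi.single c 1) x x) := by
        simp [Fintype.linearCombination_apply, hv _ _ (hθw x) _ (hθw x), B, hφθ]
    _ = (3 : k)⁻¹ * polarForm k h (∑ c, x c • Pi.single c 1) x x := by
        simp only [map_sum, map_smul, LinearMap.sum_apply, LinearMap.smul_apply, smul_eq_mul,
          Finset.mul_sum, mul_left_comm]
    _ = (3 : k)⁻¹ * polarForm k h x x x := by rw [← pi_eq_sum_univ']
    _ = 2 * eval x h := by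
        rw [polarForm_self hh, aeval_eq_eval]
        field_simp
        ring

end Realization

section LinearSubstitution

lemma eval_smul_of_isHomogeneous {R σ : Type*} [CommSemiring R] {f : MvPolynomial σ R} {m : ℕ}
    (hf : f.IsHomogeneous m) (c : R) (v : σ → R) : eval (c • v) f = c ^ m * eval v f := by
  rw [eval_eq, eval_eq, Finset.mul_sum]
  refine Finset.sum_congr rfl fun e he ↦ ?_
  simp only [Pi.smul_apply, smul_eq_mul, mul_pow, Finset.prod_mul_distrib,
    Finset.prod_pow_eq_pow_sum, ← hf.degree_eq_sum_deg_support he, mul_left_comm]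

lemma eval_add_smul_of_isHomogeneous_three {k σ : Type*} [Field k] [Fintype σ]
    {f : MvPolynomial σ k} (h2 : (2 : k) ≠ 0) (h3 : (3 : k) ≠ 0)
    (hf : f.IsHomogeneous 3) (u v : σ → k) (t : k) :
    eval (u + t • v) f = eval u f + t * (2⁻¹ * polarForm k f u u v) +
      t ^ 2 * (2⁻¹ * polarForm k f u v v) + t ^ 3 * eval v f := by
  have hvuu : polarForm k f v u u = polarForm k f u u v := by
    rw [polarForm_swap₁₂, polarForm_swap₂₃]
  have hvvu : polarForm k f v v u = polarForm k f u v v := by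
    rw [polarForm_swap₂₃, polarForm_swap₁₂]
  simp only [eval_eq_inv_six_mul_polarForm h2 h3 hf]
  simp only [map_add, map_smul, LinearMap.add_apply, LinearMap.smul_apply, smul_eq_mul, hvuu, hvvu,
    polarForm_swap₂₃ f u v u, polarForm_swap₁₂ f v u v]
  rw [show (6 : k) = 2 * 3 by norm_num]
  field_simp
  ring

variable {k σ τ : Type*} [Field k]

lemma eval_toMvPolynomial_toMatrix' [Fintype τ] [DecidableEq τ] (θ : (τ → k) →ₗ[k] σ → k)
    (y : τ → k) (i : σ) :
    eval y ((LinearMap.toMatrix' θ).toMvPolynomial i) = θ y i := by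
  rw [Matrix.toMvPolynomial_eval_eq_apply, LinearMap.toMatrix'_mulVec]

lemma exists_eval_eq_polarForm [Finite τ] [Fintype σ] (f : MvPolynomial σ k)
    (θ₁ θ₂ θ₃ : (τ → k) →ₗ[k] σ → k) :
    ∃ p : MvPolynomial τ k, ∀ y, eval y p = polarForm k f (θ₁ y) (θ₂ y) (θ₃ y) := by
  classical
  cases nonempty_fintype τ
  refine ⟨polarForm (MvPolynomial τ k) f (LinearMap.toMatrix' θ₁).toMvPolynomial
    (LinearMap.toMatrix' θ₂).toMvPolynomial (LinearMap.toMatrix' θ₃).toMvPolynomial, fun y ↦ ?_⟩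
  have hθ (θ : (τ → k) →ₗ[k] σ → k) :
      aeval (R := k) y ∘ (LinearMap.toMatrix' θ).toMvPolynomial = θ y :=
    funext fun i ↦ by simp [aeval_eq_eval, eval_toMvPolynomial_toMatrix']
  have h := map_polarForm f (aeval y : MvPolynomial τ k →ₐ[k] k)
    (LinearMap.toMatrix' θ₁).toMvPolynomial (LinearMap.toMatrix' θ₂).toMvPolynomial
    (LinearMap.toMatrix' θ₃).toMvPolynomial
  rwa [hθ, hθ, hθ, aeval_eq_eval] at h

variable [Fintype τ] [DecidableEq τ]

/-- The pullback `y ↦ f (θ y)` of a polynomial function along a linear map `θ`. -/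
noncomputable def linSubst (θ : (τ → k) →ₗ[k] σ → k) (f : MvPolynomial σ k) : MvPolynomial τ k :=
  aeval (LinearMap.toMatrix' θ).toMvPolynomial f

lemma eval_linSubst (θ : (τ → k) →ₗ[k] σ → k) (f : MvPolynomial σ k) (y : τ → k) :
    eval y (linSubst θ f) = eval (θ y) f := by
  rw [linSubst, ← aeval_eq_eval, comp_aeval_apply, aeval_eq_eval]
  simp only [aeval_eq_eval, eval_toMvPolynomial_toMatrix']

lemma exists_polynomial_eval_eq_linSubst_add_smul [Infinite k] (f : MvPolynomial σ k)
    (θ ψ : (τ → k) →ₗ[k] σ → k) :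
    ∃ G : Polynomial (MvPolynomial τ k), ∀ t, G.eval (C t) = linSubst (θ + t • ψ) f := by
  refine ⟨aeval (fun i ↦ Polynomial.C ((LinearMap.toMatrix' θ).toMvPolynomial i) +
    Polynomial.X * Polynomial.C ((LinearMap.toMatrix' ψ).toMvPolynomial i)) f,
    fun t ↦ MvPolynomial.funext fun y ↦ ?_⟩
  let ev : Polynomial (MvPolynomial τ k) →ₐ[k] k :=
    (aeval y).comp ((Polynomial.aeval (C t : MvPolynomial τ k)).restrictScalars k)
  have hG (G : Polynomial (MvPolynomial τ k)) : eval y (G.eval (C t)) = ev G := by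
    simp [ev, Polynomial.coe_aeval_eq_eval, aeval_eq_eval]
  rw [hG, comp_aeval_apply, eval_linSubst, aeval_eq_eval]
  congr 2
  ext i
  simpa [ev, aeval_eq_eval, eval_toMvPolynomial_toMatrix'] using mul_comm _ _

end LinearSubstitution

section OrbitClosure

variable {k : Type*} [Field k] {n : ℕ} {f : MvPolynomial (Fin n) k}

lemma inZariskiClosure_eval_of_infinite {S : Set (MvPolynomial (Fin n) k)}
    {G : Polynomial (MvPolynomial (Fin n) k)}
    (hG : {t | InZariskiClosure S (G.eval (C t))}.Infinite) (t : k) :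
    InZariskiClosure S (G.eval (C t)) := by
  intro P hP
  let Q : Polynomial k := aeval
    (fun m ↦ ∑ j ∈ G.support, Polynomial.C (coeff m (G.coeff j)) * Polynomial.X ^ j) P
  have hQ (s : k) : Q.eval s = eval (fun m ↦ coeff m (G.eval (C s))) P := by
    rw [← Polynomial.coe_aeval_eq_eval, comp_aeval_apply, aeval_eq_eval]
    congr 2
    ext m
    rw [G.eval_eq_sum, Polynomial.sum, coeff_sum, map_sum]
    refine Finset.sum_congr rfl fun j _ ↦ ?_
    rw [← C_pow, mul_comm (G.coeff j), coeff_C_mul]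
    simpa using mul_comm _ _
  have hQ0 : Q = 0 := Polynomial.eq_zero_of_infinite_isRoot Q <| hG.mono fun s hs ↦ by
    rw [Set.mem_ofPred_eq, Polynomial.IsRoot, hQ]
    exact hs P hP
  rw [← hQ, hQ0, Polynomial.eval_zero]

lemma linSubst_mem_glOrbit {θ : (Fin n → k) →ₗ[k] Fin n → k} (hθ : θ.det ≠ 0) :
    linSubst θ f ∈ glOrbit f := by
  refine ⟨.mkOfDetNeZero (LinearMap.toMatrix' θ).transpose ?_, ?_⟩
  · rwa [Matrix.det_transpose, LinearMap.det_toMatrix']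
  · simp only [linSubst, glAct, Matrix.GeneralLinearGroup.mkOfDetNeZero,
      Matrix.GeneralLinearGroup.val_mk', C_mul_X_eq_monomial]
    rfl

lemma inZariskiClosure_linSubst [Infinite k] (f : MvPolynomial (Fin n) k)
    (θ : (Fin n → k) →ₗ[k] Fin n → k) : InZariskiClosure (glOrbit f) (linSubst θ f) := by
  obtain ⟨G, hG⟩ := exists_polynomial_eval_eq_linSubst_add_smul f θ LinearMap.id
  have hfin : {t : k | (-θ).charpoly.IsRoot t}.Finite :=
    Polynomial.finite_setOfPred_isRoot (-θ).charpoly_monic.ne_zero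
  have hclosure := inZariskiClosure_eval_of_infinite (S := glOrbit f) (G := G)
    (hfin.infinite_compl.mono fun t ht ↦ ?_) 0
  · rwa [hG, zero_smul, add_zero] at hclosure
  · intro P hP
    rw [hG]
    refine hP _ (linSubst_mem_glOrbit ?_)
    rwa [Set.mem_compl_iff, Set.mem_ofPred_eq, Polynomial.IsRoot, LinearMap.eval_charpoly,
      sub_neg_eq_add, add_comm, Algebra.algebraMap_eq_smul_one] at ht

lemma exists_inZariskiClosure_eval_eq_polarForm [IsAlgClosed k] (h2 : (2 : k) ≠ 0)
    (h3 : (3 : k) ≠ 0) (hf : f.IsHomogeneous 3) {θ : (Fin n → k) →ₗ[k] Fin n → k}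
    (hθ : ∀ y, eval (θ y) f = 0) (ψ : (Fin n → k) →ₗ[k] Fin n → k) :
    ∃ g, InZariskiClosure (glOrbit f) g ∧
      ∀ y, eval y g = 2⁻¹ * polarForm k f (θ y) (θ y) (ψ y) := by
  obtain ⟨p, hp⟩ := exists_eval_eq_polarForm f θ θ ψ
  obtain ⟨q, hq⟩ := exists_eval_eq_polarForm f θ ψ ψ
  let G : Polynomial (MvPolynomial (Fin n) k) := .C (C 2⁻¹ * p) + .C (C 2⁻¹ * q) * .X +
    .C (linSubst ψ f) * .X ^ 2
  have hG {t c : k} (ht : t ≠ 0) (hc : c ^ 3 = t⁻¹) :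
      G.eval (C t) = linSubst (c • (θ + t • ψ)) f := by
    refine MvPolynomial.funext fun y ↦ ?_
    rw [eval_linSubst, LinearMap.smul_apply, eval_smul_of_isHomogeneous hf, hc,
      LinearMap.add_apply, LinearMap.smul_apply, eval_add_smul_of_isHomogeneous_three h2 h3 hf, hθ]
    simp only [G, Polynomial.eval_add, Polynomial.eval_mul, Polynomial.eval_pow, Polynomial.eval_C,
      Polynomial.eval_X, map_add, map_mul, map_pow, eval_C, hp, hq, eval_linSubst]
    field_simp
    ring
  refine ⟨G.eval (C 0), inZariskiClosure_eval_of_infinite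
    ((Set.finite_singleton (0 : k)).infinite_compl.mono fun t ht ↦ ?_) 0, fun y ↦ by simp [G, hp]⟩
  obtain ⟨c, hc⟩ := IsAlgClosed.exists_pow_nat_eq t⁻¹ (n := 3) (by norm_num)
  rw [Set.mem_ofPred_eq, hG ht hc]
  exact inZariskiClosure_linSubst f _

lemma eval_restrictVars (d : ℕ) (g : MvPolynomial (Fin n) k) (x : Fin d → k) :
    eval x (restrictVars d g) =
      eval (fun i : Fin n ↦ if h : (i : ℕ) < d then x ⟨i, h⟩ else 0) g := by
  rw [restrictVars, ← aeval_eq_eval, comp_aeval_apply, aeval_eq_eval]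
  congr 2
  ext i
  split_ifs <;> simp

end OrbitClosure

lemma two_mul_two_pow_sub_one_le (d : ℕ) :
    2 * (2 ^ d - 1) ≤ 2 * ((2 ^ d - 1) * (d ^ 2 * 2 ^ d + 2 * (d + 1) * d - 1) + d) := by
  rcases d.eq_zero_or_pos with rfl | hd
  · simp
  · have hfactor : 1 ≤ d ^ 2 * 2 ^ d + 2 * (d + 1) * d - 1 := by
      have : 0 < d ^ 2 * 2 ^ d := by positivity
      have : 0 < (d + 1) * d := by positivity
      lia
    have := Nat.le_mul_of_pos_right (2 ^ d - 1) hfactor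
    lia

theorem orbit_closure_surjects_general {k : Type*} [Field k] [IsAlgClosed k]
    (h2 : (2 : k) ≠ 0) (h3 : (3 : k) ≠ 0) {n : ℕ} {f : MvPolynomial (Fin n) k}
    (hf : f.IsHomogeneous 3) {r d : ℕ} (hr : r ≤ polyQRank f) (hd : 2 * (2 ^ d - 1) ≤ xi r)
    {h : MvPolynomial (Fin d) k} (hh : h.IsHomogeneous 3) :
    ∃ g : MvPolynomial (Fin n) k, InZariskiClosure (glOrbit f) g ∧ restrictVars d g = h := by
  obtain ⟨w, hw⟩ := exists_linearIndependent_pairForm_of_le_xi h2 h3 hf hr hd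
  have hspan : finrank k (Submodule.span k (Set.range w)) = 2 * (2 ^ d - 1) := by
    rw [finrank_span_eq_card (linearIndependent_of_linearIndependent_pairForm hw),
      Fintype.card_fin]
  obtain ⟨θ, hθ, hθw, hθf⟩ := exists_injective_linearMap_eval_eq_zero h2 h3 hf hspan.ge
  obtain ⟨ψ, hψ⟩ := exists_linearMap_polarForm_eq h3 hw hθ hθw hh
  have hdn : d ≤ n := by simpa using LinearMap.finrank_le_finrank_of_injective hθ
  let proj : (Fin n → k) →ₗ[k] Fin d → k := LinearMap.funLeft k k (Fin.castLE hdn)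
  obtain ⟨g, hg, hgeval⟩ := exists_inZariskiClosure_eval_eq_polarForm h2 h3 hf
    (θ := θ ∘ₗ proj) (fun y ↦ hθf (proj y)) (ψ ∘ₗ proj)
  refine ⟨g, hg, MvPolynomial.funext fun x ↦ ?_⟩
  have hproj : proj (fun i ↦ if h : (i : ℕ) < d then x ⟨i, h⟩ else 0) = x := by
    ext a
    simp [proj, LinearMap.funLeft_apply]
  rw [eval_restrictVars, hgeval, LinearMap.comp_apply, LinearMap.comp_apply, hproj, hψ,
    inv_mul_cancel_left₀ h2]

/-- Quantitative surjectivity of orbit closures: if `f ∈ P₃(kⁿ)` has q-rank `r` and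
`d ≤ n` satisfies `2((2^d - 1)(d² 2^d + 2(d+1)d - 1) + d) ≤ ξ(r)`, then the Zariski
closure of the `GLₙ(k)`-orbit of `f` surjects onto `P₃(k^d)`. -/
theorem orbit_closure_surjects {k : Type*} [Field k] [IsAlgClosed k]
    (h2 : (2 : k) ≠ 0) (h3 : (3 : k) ≠ 0) {n : ℕ}
    (f : MvPolynomial (Fin n) k) (hf : f.IsHomogeneous 3)
    (r : ℕ) (hr : polyQRank f = (r : ℕ∞))
    (d : ℕ) (hdn : d ≤ n)
    (hineq : 2 * ((2 ^ d - 1) * (d ^ 2 * 2 ^ d + 2 * (d + 1) * d - 1) + d) ≤ xi r) :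
    ∀ h : MvPolynomial (Fin d) k, h.IsHomogeneous 3 →
      ∃ g : MvPolynomial (Fin n) k,
        InZariskiClosure (glOrbit f) g ∧ restrictVars d g = h := by
  intro h hh
  exact orbit_closure_surjects_general h2 h3 hf hr.ge
    ((two_mul_two_pow_sub_one_le d).trans hineq) hh
end
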